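/- Let n∈ℕ, p∈[2,∞), s∈(0,1), and write p' = p/(p−1). Let Ω⊆ℝⁿ be a bounded open set, f∈L^{p'}_loc(Ω), and let B_{2R}(x_o) have closure contained in Ω. Let u:ℝⁿ→ℝ be a local weak solution of (−Δ_p)^s u = f in Ω, and let v:ℝⁿ→ℝ be a local weak solution of (−Δ_p)^s v = 0 in B_R(x_o) with v∈L^p(B_R(x_o)), [v]_{W^{s,p}(B_R(x_o))}<∞ and v = u a.e. in ℝⁿ∖B_R(x_o). Set w := u−v. Then there exists a constant c = c(n,p,s) such that ∬_{ℝⁿ×ℝⁿ} |w(x)−w(y)|^p/|x−y|^{n+sp} dx dy ≤ c R^{sp'} ∫_{B_R(x_o)} |f|^{p'} dx. -/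

import Mathlib

open MeasureTheory Metric Set
open scoped ENNReal

noncomputable section

/-- Double Gagliardo integral `∬_{D×D} |u(x)-u(y)|^p / |x-y|^{n+sp} dx dy` in `ℝ≥0∞`. -/
def gagliardoE (n : ℕ) (s p : ℝ) (D : Set (EuclideanSpace ℝ (Fin n)))
    (u : EuclideanSpace ℝ (Fin n) → ℝ) : ℝ≥0∞ :=
  ∫⁻ x in D, ∫⁻ y in D, ENNReal.ofReal (|u x - u y| ^ p / dist x y ^ ((n : ℝ) + s * p))

/-- Nonlocal tail `Tail(u; B_R(x₀))` in `ℝ≥0∞`. -/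
def tailE (n : ℕ) (s p : ℝ) (u : EuclideanSpace ℝ (Fin n) → ℝ)
    (x₀ : EuclideanSpace ℝ (Fin n)) (R : ℝ) : ℝ≥0∞ :=
  (ENNReal.ofReal (R ^ (s * p)) *
      ∫⁻ x in (ball x₀ R)ᶜ,
        ENNReal.ofReal (|u x| ^ (p - 1) / dist x x₀ ^ ((n : ℝ) + s * p))) ^ (1 / (p - 1))

/-- `f ∈ L^q_loc(D)`. -/
def MemLploc (n : ℕ) (q : ℝ) (D : Set (EuclideanSpace ℝ (Fin n)))
    (f : EuclideanSpace ℝ (Fin n) → ℝ) : Prop :=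
  Measurable f ∧
    ∀ K : Set (EuclideanSpace ℝ (Fin n)), K ⊆ D → IsCompact K →
      (∫⁻ x in K, ENNReal.ofReal (|f x| ^ q)) < ⊤

/-- `u` is a local weak solution of `(-Δ_p)^s u = f` in `D`. -/
def IsLocalWeakSolution (n : ℕ) (p s : ℝ) (D : Set (EuclideanSpace ℝ (Fin n)))
    (f u : EuclideanSpace ℝ (Fin n) → ℝ) : Prop :=
  Measurable u ∧
  (∀ K : Set (EuclideanSpace ℝ (Fin n)), K ⊆ D → IsCompact K →
      (∫⁻ x in K, ENNReal.ofReal (|u x| ^ p)) < ⊤ ∧ gagliardoE n s p K u < ⊤) ∧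
  (∫⁻ x, ENNReal.ofReal (|u x| ^ (p - 1) / (1 + ‖x‖) ^ ((n : ℝ) + s * p))) < ⊤ ∧
  ∀ φ : EuclideanSpace ℝ (Fin n) → ℝ, Measurable φ →
    (∃ K : Set (EuclideanSpace ℝ (Fin n)), IsCompact K ∧ K ⊆ D ∧
      ∀ᵐ x, x ∉ K → φ x = 0) →
    (∫⁻ x, ENNReal.ofReal (|φ x| ^ p)) < ⊤ →
    gagliardoE n s p Set.univ φ < ⊤ →
    (∫ x, ∫ y,
        |u x - u y| ^ (p - 2) * (u x - u y) * (φ x - φ y) / dist x y ^ ((n : ℝ) + s * p)) =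
      ∫ x in D, f x * φ x

/-- The signed `γ`-power `𝐚^γ = |a|^{γ-1} a`. -/
def sgnPow (γ a : ℝ) : ℝ := |a| ^ (γ - 1) * a

/-! ### The kernel measure -/

abbrev EE (n : ℕ) := EuclideanSpace ℝ (Fin n)

def kap (n : ℕ) (s p : ℝ) (z : EE n × EE n) : ℝ := (dist z.1 z.2 ^ ((n : ℝ) + s * p))⁻¹

lemma kap_nonneg (n : ℕ) (s p : ℝ) (z : EE n × EE n) : 0 ≤ kap n s p z := by
  unfold kap; positivity

lemma measurable_kap (n : ℕ) (s p : ℝ) : Measurable (kap n s p) := by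
  unfold kap; fun_prop

def nu (n : ℕ) (s p : ℝ) : Measure (EE n × EE n) :=
  (volume : Measure (EE n × EE n)).withDensity (fun z => ENNReal.ofReal (kap n s p z))

lemma measurable_okap (n : ℕ) (s p : ℝ) : Measurable (fun z => ENNReal.ofReal (kap n s p z)) :=
  (measurable_kap n s p).ennreal_ofReal

lemma nu_ac (n : ℕ) (s p : ℝ) : nu n s p ≪ (volume : Measure (EE n × EE n)) :=
  withDensity_absolutelyContinuous _ _

lemma lintegral_nu_prod (n : ℕ) (s p : ℝ) {S T : Set (EE n)} (hS : MeasurableSet S)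
    (hT : MeasurableSet T) {F : EE n × EE n → ℝ≥0∞} (hF : Measurable F) :
    ∫⁻ z in S ×ˢ T, F z ∂(nu n s p) =
      ∫⁻ x in S, ∫⁻ y in T, ENNReal.ofReal (kap n s p (x, y)) * F (x, y) := by
  unfold nu
  rw [restrict_withDensity (hS.prod hT),
    lintegral_withDensity_eq_lintegral_mul _ (measurable_okap n s p) hF,
    Measure.volume_eq_prod, ← Measure.prod_restrict, lintegral_prod]
  · rfl
  · exact ((measurable_okap n s p).mul hF).aemeasurable

lemma gag_eq (n : ℕ) (s p : ℝ) {D : Set (EE n)} (hD : MeasurableSet D) {u : EE n → ℝ}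
    (hu : Measurable u) :
    gagliardoE n s p D u =
      ∫⁻ z in D ×ˢ D, ENNReal.ofReal (|u z.1 - u z.2| ^ p) ∂(nu n s p) := by
  rw [lintegral_nu_prod n s p hD hD (by fun_prop)]
  unfold gagliardoE
  refine lintegral_congr fun x => lintegral_congr fun y => ?_
  rw [← ENNReal.ofReal_mul (kap_nonneg _ _ _ _), div_eq_inv_mul]
  rfl

lemma lintegral_nu_swap (n : ℕ) (s p : ℝ) {S T : Set (EE n)} (hS : MeasurableSet S)
    (hT : MeasurableSet T) {F : EE n × EE n → ℝ≥0∞} (hF : Measurable F) :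
    ∫⁻ z in T ×ˢ S, F z.swap ∂(nu n s p) = ∫⁻ z in S ×ˢ T, F z ∂(nu n s p) := by
  rw [lintegral_nu_prod n s p hS hT hF,
    lintegral_nu_prod n s p hT hS (F := fun z => F z.swap) (hF.comp measurable_swap),
    lintegral_lintegral_swap]
  · refine lintegral_congr fun x => lintegral_congr fun y => ?_
    simp [kap, dist_comm]
  · apply Measurable.aemeasurable
    have := ((measurable_okap n s p).mul (hF.comp measurable_swap))
    exact this

lemma bochner_nu (n : ℕ) (s p : ℝ) {F : EE n × EE n → ℝ} (hF : Integrable F (nu n s p)) :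
    ∫ x, ∫ y, F (x, y) / dist x y ^ ((n : ℝ) + s * p) = ∫ z, F z ∂(nu n s p) := by
  unfold nu at *
  rw [integral_withDensity_eq_integral_toReal_smul (measurable_okap n s p) (by simp)]
  rw [integrable_withDensity_iff_integrable_smul' (measurable_okap n s p) (by simp)] at hF
  rw [Measure.volume_eq_prod] at *
  rw [integral_prod _ hF]
  refine integral_congr_ae (.of_forall fun x => integral_congr_ae (.of_forall fun y => ?_))
  simp only [smul_eq_mul]
  rw [div_eq_inv_mul, ENNReal.toReal_ofReal (kap_nonneg _ _ _ _), kap]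

/-! ### Geometric estimates for the kernel -/

lemma radial_finite {n : ℕ} (hn : n ≠ 0) {s p : ℝ} (hsp : 0 < s * p) (hsp' : s * p < p) :
    Integrable (fun z : EE n => min 1 ‖z‖ ^ p * (‖z‖ ^ ((n : ℝ) + s * p))⁻¹) volume := by
  have : Nonempty (Fin n) := Fin.pos_iff_nonempty.mp (Nat.pos_of_ne_zero hn)
  have key := integrable_fun_norm_addHaar (volume : Measure (EE n))
    (f := fun r : ℝ => min 1 r ^ p * (r ^ ((n : ℝ) + s * p))⁻¹)
  rw [key, finrank_euclideanSpace_fin]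
  have hcast : ((n - 1 : ℕ) : ℝ) = (n : ℝ) - 1 := by
    rw [Nat.cast_sub (Nat.one_le_iff_ne_zero.mpr hn)]; simp
  rw [← Ioc_union_Ioi_eq_Ioi (zero_le_one (α := ℝ))]
  refine IntegrableOn.union ?_ ?_
  · have h1 : IntegrableOn (fun y : ℝ => y ^ (p - s * p - 1)) (Ioc 0 1) :=
      (intervalIntegrable_iff_integrableOn_Ioc_of_le zero_le_one).mp
        (intervalIntegral.intervalIntegrable_rpow' (by linarith))
    refine h1.congr_fun ?_ measurableSet_Ioc
    intro y hy
    have hy0 : 0 < y := hy.1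
    simp only [smul_eq_mul]
    rw [min_eq_right hy.2, ← Real.rpow_natCast, hcast, ← Real.rpow_neg hy0.le,
      ← Real.rpow_add hy0, ← Real.rpow_add hy0]
    congr 1; ring
  · have h1 : IntegrableOn (fun y : ℝ => y ^ (- s * p - 1)) (Ioi 1) :=
      integrableOn_Ioi_rpow_of_lt (by linarith) one_pos
    refine h1.congr_fun ?_ measurableSet_Ioi
    intro y hy
    have hy1 : 1 < y := hy
    have hy0 : 0 < y := by linarith
    simp only [smul_eq_mul]
    rw [min_eq_left hy1.le, ← Real.rpow_natCast, hcast, ← Real.rpow_neg hy0.le, Real.one_rpow,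
      one_mul, ← Real.rpow_add hy0]
    congr 1; ring

lemma lint_smul {n : ℕ} {ρ : ℝ} (hρ : 0 < ρ) {F : EE n → ℝ≥0∞} (hF : Measurable F) :
    ∫⁻ z, F z = ENNReal.ofReal (ρ ^ n) * ∫⁻ z, F (ρ • z) := by
  have h := Measure.map_addHaar_smul (volume : Measure (EE n)) hρ.ne'
  have h2 : ∫⁻ z, F (ρ • z) = ENNReal.ofReal |(ρ ^ n)⁻¹| * ∫⁻ z, F z := by
    rw [← lintegral_map hF (measurable_const_smul ρ), h, lintegral_smul_measure,
      finrank_euclideanSpace_fin]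
    rfl
  rw [h2, ← mul_assoc, ← ENNReal.ofReal_mul (by positivity), abs_of_pos (by positivity),
    mul_inv_cancel₀ (by positivity)]
  simp

lemma kernel_upper {n : ℕ} (hn : n ≠ 0) {s p : ℝ} (hsp : 0 < s * p) (hsp' : s * p < p) :
    ∃ C : ℝ, 0 < C ∧ ∀ (x : EE n) (ρ : ℝ), 0 < ρ →
      ∫⁻ y, ENNReal.ofReal (kap n s p (x, y)) * ENNReal.ofReal (min ρ (dist x y) ^ p) ≤
        ENNReal.ofReal (C * ρ ^ (p - s * p)) := by
  have hint := radial_finite hn hsp hsp'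
  set I : ℝ := ∫ z : EE n, min 1 ‖z‖ ^ p * (‖z‖ ^ ((n : ℝ) + s * p))⁻¹ with hI
  have hI0 : 0 ≤ I := integral_nonneg fun z => by positivity
  have hIl : ENNReal.ofReal I =
      ∫⁻ z : EE n, ENNReal.ofReal (min 1 ‖z‖ ^ p * (‖z‖ ^ ((n : ℝ) + s * p))⁻¹) :=
    ofReal_integral_eq_lintegral_ofReal hint (.of_forall fun z => by positivity)
  refine ⟨I + 1, by linarith, fun x ρ hρ => ?_⟩
  have e1 : ∫⁻ y, ENNReal.ofReal (kap n s p (x, y)) * ENNReal.ofReal (min ρ (dist x y) ^ p) =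
      ∫⁻ y : EE n, (fun z : EE n => ENNReal.ofReal
        (min ρ ‖z‖ ^ p * (‖z‖ ^ ((n : ℝ) + s * p))⁻¹)) (x - y) := by
    refine lintegral_congr fun y => ?_
    rw [← ENNReal.ofReal_mul (kap_nonneg _ _ _ _), mul_comm]
    simp [kap, dist_eq_norm]
  rw [e1, lintegral_sub_left_eq_self (μ := (volume : Measure (EE n))) (fun z : EE n => ENNReal.ofReal
        (min ρ ‖z‖ ^ p * (‖z‖ ^ ((n : ℝ) + s * p))⁻¹)) x, lint_smul hρ (by fun_prop)]
  have e2 : ∀ z : EE n, ENNReal.ofReal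
        (min ρ ‖ρ • z‖ ^ p * (‖ρ • z‖ ^ ((n : ℝ) + s * p))⁻¹) =
      ENNReal.ofReal (ρ ^ p * (ρ ^ ((n : ℝ) + s * p))⁻¹) *
        ENNReal.ofReal (min 1 ‖z‖ ^ p * (‖z‖ ^ ((n : ℝ) + s * p))⁻¹) := by
    intro z
    rw [← ENNReal.ofReal_mul (by positivity)]
    congr 1
    have : min ρ (ρ * ‖z‖) = ρ * min 1 ‖z‖ := by
      rw [mul_min_of_nonneg _ _ hρ.le, mul_one]
    rw [norm_smul, Real.norm_of_nonneg hρ.le, this, Real.mul_rpow hρ.le (by positivity),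
      Real.mul_rpow hρ.le (norm_nonneg _), mul_inv]
    ring
  simp_rw [e2]
  rw [lintegral_const_mul _ (by fun_prop), ← hIl, ← ENNReal.ofReal_mul (by positivity),
    ← ENNReal.ofReal_mul (by positivity)]
  apply ENNReal.ofReal_le_ofReal
  have e3 : ρ ^ n * (ρ ^ p * (ρ ^ ((n : ℝ) + s * p))⁻¹) = ρ ^ (p - s * p) := by
    rw [← Real.rpow_natCast, ← Real.rpow_neg hρ.le, ← Real.rpow_add hρ, ← Real.rpow_add hρ]
    congr 1; ring
  have : 0 ≤ ρ ^ (p - s * p) := by positivity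
  calc ρ ^ n * (ρ ^ p * (ρ ^ ((n : ℝ) + s * p))⁻¹ * I)
      = ρ ^ (p - s * p) * I := by rw [← e3]; ring
    _ ≤ (I + 1) * ρ ^ (p - s * p) := by nlinarith

lemma exists_dir {n : ℕ} (hn : n ≠ 0) (a : EE n) : ∃ e : EE n, ‖e‖ = 1 ∧ a = ‖a‖ • e := by
  have : Nonempty (Fin n) := Fin.pos_iff_nonempty.mp (Nat.pos_of_ne_zero hn)
  by_cases ha : a = 0
  · obtain ⟨e, he⟩ := NormedSpace.exists_lt_norm ℝ (EE n) 0
    have he0 : e ≠ 0 := norm_pos_iff.mp he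
    exact ⟨‖e‖⁻¹ • e, norm_smul_inv_norm (𝕜 := ℝ) he0, by simp [ha]⟩
  · exact ⟨‖a‖⁻¹ • a, norm_smul_inv_norm (𝕜 := ℝ) ha, by
      rw [smul_smul, mul_inv_cancel₀ (norm_ne_zero_iff.mpr ha), one_smul]⟩

lemma kernel_lower {n : ℕ} (hn : n ≠ 0) {s p : ℝ} (hsp : 0 < s * p) :
    ∃ c : ℝ, 0 < c ∧ ∀ (x₀ x : EE n) (R : ℝ), x ∈ ball x₀ R →
      ENNReal.ofReal (c * (R - dist x x₀) ^ (-(s * p))) ≤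
        ∫⁻ y in (ball x₀ R)ᶜ, ENNReal.ofReal (kap n s p (x, y)) := by
  have : Nonempty (Fin n) := Fin.pos_iff_nonempty.mp (Nat.pos_of_ne_zero hn)
  set b : ℝ := (volume (ball (0 : EE n) 1)).toReal with hb
  have hbpos : 0 < b := ENNReal.toReal_pos (measure_ball_pos _ _ one_pos).ne' measure_ball_lt_top.ne
  refine ⟨b * ((3 : ℝ) ^ ((n : ℝ) + s * p))⁻¹, by positivity, fun x₀ x R hx => ?_⟩
  set d : ℝ := R - dist x x₀ with hd
  have hd0 : 0 < d := by rw [hd]; have := mem_ball.mp hx; linarith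
  obtain ⟨e, he, hae⟩ := exists_dir hn (x - x₀)
  have hdn : dist x x₀ = ‖x - x₀‖ := dist_eq_norm _ _
  set y₀ : EE n := x₀ + (R + d) • e with hy₀
  have hR : 0 ≤ R + d := by have := dist_nonneg (x := x) (y := x₀); linarith
  have h1 : dist y₀ x₀ = R + d := by
    rw [dist_eq_norm, hy₀, add_sub_cancel_left, norm_smul, he, mul_one, Real.norm_of_nonneg hR]
  have h2 : dist x y₀ = 2 * d := by
    have : x - y₀ = (- (2 * d)) • e := by
      have : x = x₀ + ‖x - x₀‖ • e := by rw [← hae]; abel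
      rw [hy₀, this]
      have h3 : ‖x₀ + ‖x - x₀‖ • e - x₀‖ = ‖x - x₀‖ := by rw [← this]
      have h4 : ‖x - x₀‖ = R - d := by rw [← hdn]; linarith
      rw [h4]
      module
    rw [dist_eq_norm, this, norm_smul, he, mul_one, norm_neg, Real.norm_of_nonneg (by positivity)]
  have hsub : ball y₀ d ⊆ (ball x₀ R)ᶜ := by
    intro y hy hy'
    have := dist_triangle y₀ y x₀
    rw [mem_ball] at hy hy'
    rw [dist_comm] at hy
    linarith
  have hvol : volume (ball y₀ d) = ENNReal.ofReal (d ^ n * b) := by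
    rw [Measure.addHaar_ball_of_pos _ _ hd0, finrank_euclideanSpace_fin,
      ENNReal.ofReal_mul (by positivity), hb, ENNReal.ofReal_toReal measure_ball_lt_top.ne]
  have hkey : ∀ y ∈ ball y₀ d, y ≠ x → ENNReal.ofReal (((3 * d) ^ ((n : ℝ) + s * p))⁻¹) ≤
      ENNReal.ofReal (kap n s p (x, y)) := by
    intro y hy hyx
    apply ENNReal.ofReal_le_ofReal
    unfold kap
    have hpos : 0 < dist x y := dist_pos.mpr (Ne.symm hyx)
    apply inv_anti₀ (by positivity)
    apply Real.rpow_le_rpow hpos.le _ (by positivity)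
    have := dist_triangle x y₀ y
    rw [mem_ball, dist_comm] at hy
    linarith
  have hne : ∀ y ∈ ball y₀ d, y ≠ x := by
    rintro y hy rfl
    rw [mem_ball] at hy
    linarith
  calc ENNReal.ofReal (b * ((3 : ℝ) ^ ((n : ℝ) + s * p))⁻¹ * d ^ (-(s * p)))
      = ENNReal.ofReal (((3 * d) ^ ((n : ℝ) + s * p))⁻¹) * volume (ball y₀ d) := by
        rw [hvol, ← ENNReal.ofReal_mul (by positivity)]
        congr 1
        rw [Real.mul_rpow (by norm_num) hd0.le, Real.rpow_add hd0, Real.rpow_natCast,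
          Real.rpow_neg hd0.le]
        field_simp
    _ = ∫⁻ y in ball y₀ d, ENNReal.ofReal (((3 * d) ^ ((n : ℝ) + s * p))⁻¹) := by simp
    _ ≤ ∫⁻ y in ball y₀ d, ENNReal.ofReal (kap n s p (x, y)) :=
        setLIntegral_mono' measurableSet_ball fun y hy => hkey y hy (hne y hy)
    _ ≤ _ := lintegral_mono_set hsub

/-! ### Pointwise inequalities -/

def JJ (p a : ℝ) : ℝ := |a| ^ (p - 2) * a

lemma measurable_JJ (p : ℝ) : Measurable (JJ p) := by
  unfold JJ; fun_prop

lemma abs_JJ {p : ℝ} (hp : 2 ≤ p) (a : ℝ) : |JJ p a| = |a| ^ (p - 1) := by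
  unfold JJ
  rw [abs_mul, abs_of_nonneg (by positivity : (0 : ℝ) ≤ |a| ^ (p - 2))]
  by_cases ha : a = 0
  · rw [ha]; simp [Real.zero_rpow (by linarith : p - 1 ≠ 0)]
  · have : 0 < |a| := abs_pos.mpr ha
    nth_rewrite 2 [← Real.rpow_one |a|]
    rw [← Real.rpow_add this]; congr 1; ring

lemma rpow_pm2 {p : ℝ} (hp : 2 ≤ p) {a : ℝ} (ha : 0 ≤ a) : a ^ (p - 2) * a ^ 2 = a ^ p := by
  rcases ha.eq_or_lt with h | h
  · rw [← h]; simp [Real.zero_rpow (by linarith : p ≠ 0)]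
  · rw [← Real.rpow_natCast, ← Real.rpow_add h]; congr 1; norm_num

def c0 (p : ℝ) : ℝ := (2 * 2 ^ (p - 2))⁻¹

lemma c0_pos (p : ℝ) : 0 < c0 p := by unfold c0; positivity

lemma mono_JJ {p : ℝ} (hp : 2 ≤ p) (a b : ℝ) :
    c0 p * |a - b| ^ p ≤ (JJ p a - JJ p b) * (a - b) := by
  have hp2 : 0 ≤ p - 2 := by linarith
  set α := |a| ^ (p - 2) with hα
  set β := |b| ^ (p - 2) with hβ
  have hα0 : 0 ≤ α := by positivity
  have hβ0 : 0 ≤ β := by positivity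
  have h1 : 0 ≤ (α - β) * (a ^ 2 - b ^ 2) := by
    rcases le_total |a| |b| with h | h
    · have h2 : α ≤ β := Real.rpow_le_rpow (abs_nonneg _) h hp2
      have h3 : a ^ 2 ≤ b ^ 2 := sq_le_sq.mpr h
      nlinarith
    · have h2 : β ≤ α := Real.rpow_le_rpow (abs_nonneg _) h hp2
      have h3 : b ^ 2 ≤ a ^ 2 := sq_le_sq.mpr h
      nlinarith
  have h4 : |a - b| ^ (p - 2) ≤ 2 ^ (p - 2) * (α + β) := by
    have hab : |a - b| ≤ 2 * max |a| |b| := by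
      have := abs_sub a b
      have := le_max_left |a| |b|
      have := le_max_right |a| |b|
      linarith
    have hm : (max |a| |b|) ^ (p - 2) ≤ α + β := by
      rcases le_total |a| |b| with h | h
      · rw [max_eq_right h]; linarith
      · rw [max_eq_left h]; linarith
    calc |a - b| ^ (p - 2) ≤ (2 * max |a| |b|) ^ (p - 2) :=
          Real.rpow_le_rpow (abs_nonneg _) hab hp2
      _ = 2 ^ (p - 2) * (max |a| |b|) ^ (p - 2) := by
          rw [Real.mul_rpow (by norm_num) (by positivity)]
      _ ≤ _ := by gcongr
  have h5 : |a - b| ^ p = |a - b| ^ (p - 2) * (a - b) ^ 2 := by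
    rw [← rpow_pm2 hp (abs_nonneg (a - b)), sq_abs]
  have h6 : c0 p * |a - b| ^ p ≤ 1 / 2 * (α + β) * (a - b) ^ 2 := by
    rw [h5]
    have hc : c0 p * (2 ^ (p - 2) * (α + β)) = 1 / 2 * (α + β) := by
      unfold c0
      have : (0 : ℝ) < 2 ^ (p - 2) := by positivity
      field_simp
    calc c0 p * (|a - b| ^ (p - 2) * (a - b) ^ 2)
        ≤ c0 p * ((2 ^ (p - 2) * (α + β)) * (a - b) ^ 2) := by
          have := (c0_pos p).le
          gcongr
      _ = _ := by rw [← hc]; ring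
  have h7 : (JJ p a - JJ p b) * (a - b) =
      1 / 2 * (α + β) * (a - b) ^ 2 + 1 / 2 * ((α - β) * (a ^ 2 - b ^ 2)) := by
    unfold JJ; rw [← hα, ← hβ]; ring
  linarith

lemma young_m {p : ℝ} (hp : 2 ≤ p) {x y m : ℝ} (hx : 0 ≤ x) (hy : 0 ≤ y) (hm : 1 ≤ m) :
    x ^ (p - 1) * y ≤ m * x ^ p + m⁻¹ * y ^ p := by
  have hm0 : 0 < m := by linarith
  have e : ∀ t : ℝ, 0 ≤ t → t ^ (p - 1) * t = t ^ p := by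
    intro t ht
    rcases ht.eq_or_lt with h | h
    · rw [← h]; simp [Real.zero_rpow (by linarith : p ≠ 0)]
    · nth_rewrite 2 [← Real.rpow_one t]
      rw [← Real.rpow_add h]; congr 1; ring
  have hxp : 0 ≤ x ^ p := by positivity
  have hyp : 0 ≤ y ^ p := by positivity
  rcases le_total y (m * x) with h | h
  · have : x ^ (p - 1) * y ≤ x ^ (p - 1) * (m * x) := by gcongr
    have h2 : x ^ (p - 1) * (m * x) = m * x ^ p := by rw [← e x hx]; ring
    have : 0 ≤ m⁻¹ * y ^ p := by positivity
    linarith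
  · have h1 : x ≤ m⁻¹ * y := by
      rw [inv_mul_eq_div, le_div_iff₀ hm0]; linarith
    have h2 : x ^ (p - 1) ≤ m⁻¹ * y ^ (p - 1) := by
      calc x ^ (p - 1) ≤ (m⁻¹ * y) ^ (p - 1) := Real.rpow_le_rpow hx h1 (by linarith)
        _ = m⁻¹ ^ (p - 1) * y ^ (p - 1) := Real.mul_rpow (by positivity) hy
        _ ≤ m⁻¹ ^ (1 : ℝ) * y ^ (p - 1) := by
            gcongr ?_ * _
            exact Real.rpow_le_rpow_of_exponent_ge (by positivity) (inv_le_one_of_one_le₀ hm)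
              (by linarith)
        _ = _ := by rw [Real.rpow_one]
    have : x ^ (p - 1) * y ≤ m⁻¹ * y ^ (p - 1) * y := by gcongr
    have h3 : m⁻¹ * y ^ (p - 1) * y = m⁻¹ * y ^ p := by rw [← e y hy]; ring
    have : 0 ≤ m * x ^ p := by positivity
    linarith

lemma add_rpow_le2 {q : ℝ} (hq : 0 ≤ q) {a b : ℝ} (ha : 0 ≤ a) (hb : 0 ≤ b) :
    (a + b) ^ q ≤ 2 ^ q * (a ^ q + b ^ q) := by
  have h : a + b ≤ 2 * max a b := by
    have := le_max_left a b
    have := le_max_right a b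
    linarith
  have hm : (max a b) ^ q ≤ a ^ q + b ^ q := by
    have h1 : 0 ≤ a ^ q := by positivity
    have h2 : 0 ≤ b ^ q := by positivity
    rcases le_total a b with h | h
    · rw [max_eq_right h]; linarith
    · rw [max_eq_left h]; linarith
  calc (a + b) ^ q ≤ (2 * max a b) ^ q := Real.rpow_le_rpow (by positivity) h hq
    _ = 2 ^ q * (max a b) ^ q := by rw [Real.mul_rpow (by norm_num) (by positivity)]
    _ ≤ _ := by gcongr

lemma abs_sub_rpow_le2 {q : ℝ} (hq : 0 ≤ q) (a b : ℝ) :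
    |a - b| ^ q ≤ 2 ^ q * (|a| ^ q + |b| ^ q) :=
  (Real.rpow_le_rpow (abs_nonneg _) (abs_sub a b) hq).trans
    (add_rpow_le2 hq (abs_nonneg _) (abs_nonneg _))

/-- Radial cutoff profile. -/
def tau (ε d : ℝ) : ℝ := if ε < d then 1 - ε / d else 0

lemma tau_nonneg {ε d : ℝ} (hε : 0 < ε) : 0 ≤ tau ε d := by
  unfold tau
  split_ifs with h
  · have hd : 0 < d := hε.trans h
    have : ε / d ≤ 1 := (div_le_one hd).mpr h.le
    linarith
  · exact le_rfl

lemma tau_le_one {ε d : ℝ} (hε : 0 < ε) : tau ε d ≤ 1 := by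
  unfold tau
  split_ifs with h
  · have hd : 0 < d := hε.trans h
    have : 0 ≤ ε / d := by positivity
    linarith
  · exact zero_le_one

lemma measurable_tau (ε : ℝ) : Measurable (tau ε) := by
  unfold tau
  exact Measurable.ite measurableSet_Ioi (by fun_prop) measurable_const

lemma tau_sub_le {ε d d' : ℝ} (hε : 0 < ε) (hd : 0 < d) :
    tau ε d - tau ε d' ≤ |d - d'| / d := by
  have habs : d - d' ≤ |d - d'| := le_abs_self _
  have h0 : 0 ≤ |d - d'| / d := by positivity
  unfold tau
  split_ifs with h h' h'
  · have hd' : 0 < d' := hε.trans h'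
    have e : 1 - ε / d - (1 - ε / d') = (ε / d') * ((d - d') / d) := by field_simp; ring
    rw [e]
    have h1 : ε / d' ≤ 1 := (div_le_one hd').mpr h'.le
    have h2 : 0 ≤ ε / d' := by positivity
    calc (ε / d') * ((d - d') / d) ≤ (ε / d') * (|d - d'| / d) := by gcongr
      _ ≤ 1 * (|d - d'| / d) := by gcongr
      _ = _ := one_mul _
  · push Not at h'
    have e : 1 - ε / d - 0 = (d - ε) / d := by field_simp; ring
    rw [e]
    gcongr
    linarith
  · have hd' : 0 < d' := hε.trans h'
    have : ε / d' ≤ 1 := (div_le_one hd').mpr h'.le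
    linarith
  · linarith

lemma cut_diff {a b t t' q q' : ℝ} (ht : 0 ≤ t) (ht1 : t ≤ 1) (ht' : 0 ≤ t') (ht1' : t' ≤ 1)
    (h : t - t' ≤ q) (h' : t' - t ≤ q') (hq : 0 ≤ q) (hq' : 0 ≤ q') :
    |a * t ^ 2 - b * t' ^ 2| ≤
      |a - b| + (2 * (|a| * (t * min t q)) + 2 * (|b| * (t' * min t' q'))) := by
  have main : ∀ a b t t' q : ℝ, 0 ≤ t → t ≤ 1 → 0 ≤ t' → t' ≤ 1 → t - t' ≤ q → t' ≤ t →
      |a * t ^ 2 - b * t' ^ 2| ≤ |a - b| + 2 * (|a| * (t * min t q)) := by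
    intro a b t t' q ht ht1 ht' ht1' h htt
    have e : a * t ^ 2 - b * t' ^ 2 = (a - b) * t' ^ 2 + a * (t ^ 2 - t' ^ 2) := by ring
    have h1 : |(a - b) * t' ^ 2| ≤ |a - b| := by
      rw [abs_mul, abs_of_nonneg (by positivity : 0 ≤ t' ^ 2)]
      have : t' ^ 2 ≤ 1 := pow_le_one₀ ht' ht1'
      exact mul_le_of_le_one_right (abs_nonneg _) this
    have hmin : t - t' ≤ min t q := le_min (by linarith) h
    have h2 : t ^ 2 - t' ^ 2 ≤ 2 * (t * min t q) := by nlinarith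
    have h3 : 0 ≤ t ^ 2 - t' ^ 2 := by nlinarith
    have h4 : |a * (t ^ 2 - t' ^ 2)| ≤ 2 * (|a| * (t * min t q)) := by
      rw [abs_mul, abs_of_nonneg h3]
      calc |a| * (t ^ 2 - t' ^ 2) ≤ |a| * (2 * (t * min t q)) := by gcongr
        _ = _ := by ring
    rw [e]
    exact (abs_add_le _ _).trans (by linarith)
  have n1 : 0 ≤ 2 * (|a| * (t * min t q)) := by positivity
  have n2 : 0 ≤ 2 * (|b| * (t' * min t' q')) := by positivity
  rcases le_total t' t with htt | htt
  · have := main a b t t' q ht ht1 ht' ht1' h htt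
    linarith
  · have := main b a t' t q' ht' ht1' ht ht1 h' htt
    rw [abs_sub_comm, abs_sub_comm b a] at this
    linarith

lemma cut_diff_pow {p a b t t' q q' : ℝ} (hp : 2 ≤ p) (ht : 0 ≤ t) (ht1 : t ≤ 1) (ht' : 0 ≤ t')
    (ht1' : t' ≤ 1) (h : t - t' ≤ q) (h' : t' - t ≤ q') (hq : 0 ≤ q) (hq' : 0 ≤ q') :
    |a * t ^ 2 - b * t' ^ 2| ^ p ≤
      8 ^ p * (|a - b| ^ p + (|a| ^ p * (t * min t q) ^ p + |b| ^ p * (t' * min t' q') ^ p)) := by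
  have hp0 : 0 ≤ p := by linarith
  have hA : 0 ≤ |a| * (t * min t q) := by positivity
  have hB : 0 ≤ |b| * (t' * min t' q') := by positivity
  set A := |a| * (t * min t q) with hAd
  set B := |b| * (t' * min t' q') with hBd
  have h1 := cut_diff (a := a) (b := b) ht ht1 ht' ht1' h h' hq hq'
  have e8 : (8 : ℝ) ^ p = 2 ^ p * (2 ^ p * 2 ^ p) := by
    rw [← Real.mul_rpow (by norm_num) (by norm_num), ← Real.mul_rpow (by norm_num) (by norm_num)]
    norm_num
  have h2p : (1 : ℝ) ≤ 2 ^ p := Real.one_le_rpow (by norm_num) hp0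
  calc |a * t ^ 2 - b * t' ^ 2| ^ p
      ≤ (|a - b| + (2 * A + 2 * B)) ^ p := Real.rpow_le_rpow (abs_nonneg _) h1 hp0
    _ ≤ 2 ^ p * (|a - b| ^ p + (2 * A + 2 * B) ^ p) :=
        add_rpow_le2 hp0 (abs_nonneg _) (by positivity)
    _ ≤ 2 ^ p * (|a - b| ^ p + 2 ^ p * ((2 * A) ^ p + (2 * B) ^ p)) := by
        gcongr
        exact add_rpow_le2 hp0 (by positivity) (by positivity)
    _ = 2 ^ p * (1 * |a - b| ^ p + 2 ^ p * 2 ^ p * (A ^ p + B ^ p)) := by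
        rw [Real.mul_rpow (by norm_num) hA, Real.mul_rpow (by norm_num) hB]; ring
    _ ≤ 2 ^ p * ((2 ^ p * 2 ^ p) * |a - b| ^ p + 2 ^ p * 2 ^ p * (A ^ p + B ^ p)) := by
        gcongr
        nlinarith
    _ = _ := by
        rw [e8, hAd, hBd, Real.mul_rpow (abs_nonneg a) (by positivity),
          Real.mul_rpow (abs_nonneg b) (by positivity)]
        ring

/-! ### Integrability of the weak form -/

lemma kap_far {n : ℕ} {s p : ℝ} (hsp : 0 < s * p) (x₀ : EE n) {r r' : ℝ} (hr : r < r') :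
    ∃ M : ℝ, 0 < M ∧ ∀ x y : EE n, x ∈ closedBall x₀ r → y ∉ closedBall x₀ r' →
      kap n s p (x, y) ≤ M * (1 + ‖y‖) ^ (-((n : ℝ) + s * p)) := by
  set L : ℝ := ‖x₀‖ + |r| + 1 with hL
  have hL0 : 0 < L := by positivity
  have hδ : 0 < r' - r := by linarith
  set M : ℝ := L / (r' - r) + 1 with hM
  have hM0 : 0 < M := by positivity
  refine ⟨M ^ ((n : ℝ) + s * p), by positivity, fun x y hx hy => ?_⟩
  rw [mem_closedBall] at hx hy
  push Not at hy
  have h1 : r' - r ≤ dist x y := by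
    have := dist_triangle y x x₀
    rw [dist_comm y x] at this
    linarith
  have hd : 0 < dist x y := by linarith
  have h2 : ‖x‖ ≤ ‖x₀‖ + r := by
    have := norm_le_norm_add_norm_sub' x x₀
    rw [dist_eq_norm] at hx
    linarith
  have h3 : ‖y‖ ≤ ‖x‖ + dist x y := by
    have := norm_le_norm_add_norm_sub' y x
    rw [dist_comm, dist_eq_norm]
    linarith
  have h4 : L ≤ L / (r' - r) * dist x y := by
    calc L = L / (r' - r) * (r' - r) := by field_simp
      _ ≤ _ := by gcongr
  have h5 : 1 + ‖y‖ ≤ M * dist x y := by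
    have := le_abs_self r
    rw [hM]
    linarith
  have hy0 : 0 < 1 + ‖y‖ := by positivity
  unfold kap
  rw [Real.rpow_neg hy0.le, ← div_eq_mul_inv, le_div_iff₀ (by positivity), inv_mul_le_iff₀ (by positivity)]
  calc (1 + ‖y‖) ^ ((n : ℝ) + s * p) ≤ (M * dist x y) ^ ((n : ℝ) + s * p) := by gcongr
    _ = _ := by rw [Real.mul_rpow hM0.le hd.le]; ring

lemma int_J {n : ℕ} {s p : ℝ} (hp : 2 ≤ p) (hsp : 0 < s * p) {u φ : EE n → ℝ}
    (hu : Measurable u) (hφ : Measurable φ) (x₀ : EE n) {r r' : ℝ} (hr : r < r')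
    (hu1 : (∫⁻ x in closedBall x₀ r', ENNReal.ofReal (|u x| ^ p)) < ⊤)
    (hu2 : gagliardoE n s p (closedBall x₀ r') u < ⊤)
    (hu3 : (∫⁻ x, ENNReal.ofReal (|u x| ^ (p - 1) / (1 + ‖x‖) ^ ((n : ℝ) + s * p))) < ⊤)
    (hφ0 : ∀ x, x ∉ closedBall x₀ r → φ x = 0)
    (hφ1 : (∫⁻ x, ENNReal.ofReal (|φ x| ^ p)) < ⊤)
    (hφ2 : gagliardoE n s p univ φ < ⊤) :
    Integrable (fun z : EE n × EE n => JJ p (u z.1 - u z.2) * (φ z.1 - φ z.2)) (nu n s p) := by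
  set K := closedBall x₀ r' with hK
  have hKm : MeasurableSet K := measurableSet_closedBall
  have hKfin : volume K < ⊤ := (isCompact_closedBall x₀ r').measure_lt_top
  have hφK : ∀ x, x ∉ K → φ x = 0 := fun x hx =>
    hφ0 x fun h => hx (closedBall_subset_closedBall hr.le h)
  have mJ := measurable_JJ p
  have hmeas : Measurable (fun z : EE n × EE n => JJ p (u z.1 - u z.2) * (φ z.1 - φ z.2)) := by
    fun_prop
  refine ⟨hmeas.aestronglyMeasurable, ?_⟩
  set G : EE n × EE n → ℝ≥0∞ := fun z =>
    ENNReal.ofReal (|u z.1 - u z.2| ^ (p - 1) * |φ z.1 - φ z.2|) with hG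
  have hGm : Measurable G := by rw [hG]; fun_prop
  have hnorm : ∀ z : EE n × EE n, ‖JJ p (u z.1 - u z.2) * (φ z.1 - φ z.2)‖ₑ = G z := by
    intro z
    rw [hG, Real.enorm_eq_ofReal_abs, abs_mul, abs_JJ hp]
  unfold HasFiniteIntegral
  simp_rw [hnorm]
  rw [gag_eq n s p hKm hu] at hu2
  rw [gag_eq n s p MeasurableSet.univ hφ] at hφ2
  have h11 : ∫⁻ z in K ×ˢ K, G z ∂(nu n s p) < ⊤ := by
    calc ∫⁻ z in K ×ˢ K, G z ∂(nu n s p)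
        ≤ ∫⁻ z in K ×ˢ K, (ENNReal.ofReal (|u z.1 - u z.2| ^ p) +
            ENNReal.ofReal (|φ z.1 - φ z.2| ^ p)) ∂(nu n s p) := by
          refine lintegral_mono fun z => ?_
          rw [← ENNReal.ofReal_add (by positivity) (by positivity)]
          apply ENNReal.ofReal_le_ofReal
          have := young_m hp (abs_nonneg (u z.1 - u z.2)) (abs_nonneg (φ z.1 - φ z.2)) le_rfl
          simpa using this
      _ = (∫⁻ z in K ×ˢ K, ENNReal.ofReal (|u z.1 - u z.2| ^ p) ∂(nu n s p)) +
            ∫⁻ z in K ×ˢ K, ENNReal.ofReal (|φ z.1 - φ z.2| ^ p) ∂(nu n s p) :=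
          lintegral_add_left (by fun_prop) _
      _ < ⊤ := ENNReal.add_lt_top.mpr ⟨hu2,
          (lintegral_mono_set (by intro z _; exact ⟨trivial, trivial⟩)).trans_lt hφ2⟩
  have h12 : ∫⁻ z in K ×ˢ Kᶜ, G z ∂(nu n s p) < ⊤ := by
    rw [lintegral_nu_prod n s p hKm hKm.compl hGm]
    obtain ⟨M, hM0, hM⟩ := kap_far (s := s) (p := p) hsp x₀ hr
    set g : EE n → ℝ := fun y => (1 + ‖y‖) ^ (-((n : ℝ) + s * p)) with hg
    have hg0 : ∀ y, 0 ≤ g y := fun y => by rw [hg]; positivity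
    set B := ∫⁻ y : EE n, ENNReal.ofReal (g y) with hB
    have hBfin : B < ⊤ := by
      have := finite_integral_one_add_norm (μ := (volume : Measure (EE n)))
        (r := (n : ℝ) + s * p) (by rw [finrank_euclideanSpace_fin]; linarith)
      exact this
    set D := ∫⁻ y : EE n, ENNReal.ofReal (|u y| ^ (p - 1) * g y) with hD
    have hDfin : D < ⊤ := by
      have : D = ∫⁻ x, ENNReal.ofReal (|u x| ^ (p - 1) / (1 + ‖x‖) ^ ((n : ℝ) + s * p)) := by
        rw [hD]
        refine lintegral_congr fun y => ?_
        have hy0 : 0 < 1 + ‖y‖ := by positivity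
        rw [hg, div_eq_mul_inv]
        simp only
        rw [Real.rpow_neg hy0.le]
      rw [this]; exact hu3
    set C : ℝ := M * 2 ^ (p - 1) with hC
    have hC0 : 0 ≤ C := by positivity
    have hpt : ∀ x : EE n, ∀ y ∈ Kᶜ, ENNReal.ofReal (kap n s p (x, y)) * G (x, y) ≤
        ENNReal.ofReal (C * (|u x| ^ p + |φ x| ^ p)) * ENNReal.ofReal (g y) +
        ENNReal.ofReal (C * (1 + |φ x| ^ p)) * ENNReal.ofReal (|u y| ^ (p - 1) * g y) := by
      intro x y hy
      rw [hG, ← ENNReal.ofReal_mul (kap_nonneg _ _ _ _), ← ENNReal.ofReal_mul (by positivity),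
        ← ENNReal.ofReal_mul (by positivity), ← ENNReal.ofReal_add]
      rotate_left
      · exact mul_nonneg (by positivity) (hg0 y)
      · exact mul_nonneg (by positivity) (mul_nonneg (by positivity) (hg0 y))
      apply ENNReal.ofReal_le_ofReal
      simp only
      rw [hφK y hy, sub_zero]
      by_cases hx : x ∈ closedBall x₀ r
      · have h1 := hM x y hx hy
        have h2 := abs_sub_rpow_le2 (q := p - 1) (by linarith) (u x) (u y)
        have h3 : |u x| ^ (p - 1) * |φ x| ≤ |u x| ^ p + |φ x| ^ p := by
          simpa using young_m hp (abs_nonneg (u x)) (abs_nonneg (φ x)) le_rfl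
        have h4 : |φ x| ≤ 1 + |φ x| ^ p := by
          simpa using young_m hp zero_le_one (abs_nonneg (φ x)) le_rfl
        calc kap n s p (x, y) * (|u x - u y| ^ (p - 1) * |φ x|)
            ≤ (M * g y) * ((2 ^ (p - 1) * (|u x| ^ (p - 1) + |u y| ^ (p - 1))) * |φ x|) := by
              have := hg0 y
              gcongr
          _ = C * (|u x| ^ (p - 1) * |φ x|) * g y + C * |φ x| * (|u y| ^ (p - 1) * g y) := by
              rw [hC]; ring
          _ ≤ _ := by
              have := hg0 y
              gcongr
      · rw [hφ0 x hx]
        have := hg0 y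
        simp only [abs_zero, mul_zero]
        positivity
    have h1φ : ∫⁻ x in K, ENNReal.ofReal (|φ x| ^ p) < ⊤ :=
      (setLIntegral_le_lintegral _ _).trans_lt hφ1
    calc ∫⁻ x in K, ∫⁻ y in Kᶜ, ENNReal.ofReal (kap n s p (x, y)) * G (x, y)
        ≤ ∫⁻ x in K, ∫⁻ y in Kᶜ,
          (ENNReal.ofReal (C * (|u x| ^ p + |φ x| ^ p)) * ENNReal.ofReal (g y) +
          ENNReal.ofReal (C * (1 + |φ x| ^ p)) * ENNReal.ofReal (|u y| ^ (p - 1) * g y)) :=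
          lintegral_mono fun x => setLIntegral_mono' hKm.compl (hpt x)
      _ ≤ ∫⁻ x in K, (ENNReal.ofReal (C * (|u x| ^ p + |φ x| ^ p)) * B +
          ENNReal.ofReal (C * (1 + |φ x| ^ p)) * D) := by
          refine lintegral_mono fun x => (setLIntegral_le_lintegral _ _).trans ?_
          rw [lintegral_add_left (by fun_prop), lintegral_const_mul _ (by fun_prop),
            lintegral_const_mul _ (by fun_prop)]
      _ = (∫⁻ x in K, ENNReal.ofReal (C * (|u x| ^ p + |φ x| ^ p))) * B +
          (∫⁻ x in K, ENNReal.ofReal (C * (1 + |φ x| ^ p))) * D := by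
          rw [lintegral_add_left (by fun_prop), lintegral_mul_const _ (by fun_prop),
            lintegral_mul_const _ (by fun_prop)]
      _ < ⊤ := by
          refine ENNReal.add_lt_top.mpr ⟨ENNReal.mul_lt_top ?_ hBfin, ENNReal.mul_lt_top ?_ hDfin⟩
          · simp_rw [ENNReal.ofReal_mul hC0]
            rw [lintegral_const_mul _ (by fun_prop)]
            refine ENNReal.mul_lt_top ENNReal.ofReal_lt_top ?_
            have : ∀ x, ENNReal.ofReal (|u x| ^ p + |φ x| ^ p) =
              ENNReal.ofReal (|u x| ^ p) + ENNReal.ofReal (|φ x| ^ p) :=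
                fun x => ENNReal.ofReal_add (by positivity) (by positivity)
            simp_rw [this]
            rw [lintegral_add_left (by fun_prop)]
            exact ENNReal.add_lt_top.mpr ⟨hu1, h1φ⟩
          · simp_rw [ENNReal.ofReal_mul hC0]
            rw [lintegral_const_mul _ (by fun_prop)]
            refine ENNReal.mul_lt_top ENNReal.ofReal_lt_top ?_
            have : ∀ x, ENNReal.ofReal (1 + |φ x| ^ p) =
              ENNReal.ofReal 1 + ENNReal.ofReal (|φ x| ^ p) :=
                fun x => ENNReal.ofReal_add (by positivity) (by positivity)
            simp_rw [this]
            rw [lintegral_add_left (by fun_prop)]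
            refine ENNReal.add_lt_top.mpr ⟨?_, h1φ⟩
            simpa using hKfin
  have hsymm : ∀ z : EE n × EE n, G z.swap = G z := by
    intro z
    simp only [hG, Prod.fst_swap, Prod.snd_swap]
    rw [abs_sub_comm, abs_sub_comm (φ z.2)]
  have h21 : ∫⁻ z in Kᶜ ×ˢ K, G z ∂(nu n s p) < ⊤ := by
    have := lintegral_nu_swap n s p hKm hKm.compl hGm
    simp_rw [hsymm] at this
    rw [this]; exact h12
  have h22 : ∫⁻ z in Kᶜ ×ˢ Kᶜ, G z ∂(nu n s p) = 0 := by
    rw [← lintegral_zero (μ := (nu n s p).restrict (Kᶜ ×ˢ Kᶜ))]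
    refine setLIntegral_congr_fun (hKm.compl.prod hKm.compl) fun z hz => ?_
    simp [hG, hφK z.1 hz.1, hφK z.2 hz.2]
  have hcov : (univ : Set (EE n × EE n)) ⊆ (K ×ˢ K ∪ K ×ˢ Kᶜ) ∪ (Kᶜ ×ˢ K ∪ Kᶜ ×ˢ Kᶜ) := by
    intro z _
    by_cases h1 : z.1 ∈ K <;> by_cases h2 : z.2 ∈ K <;> simp [h1, h2]
  calc ∫⁻ z, G z ∂(nu n s p) = ∫⁻ z in univ, G z ∂(nu n s p) := by rw [Measure.restrict_univ]
    _ ≤ _ := lintegral_mono_set hcov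
    _ ≤ _ := lintegral_union_le _ _ _
    _ ≤ _ := add_le_add (lintegral_union_le _ _ _) (lintegral_union_le _ _ _)
    _ < ⊤ := by
      rw [h22, add_zero]
      exact ENNReal.add_lt_top.mpr ⟨ENNReal.add_lt_top.mpr ⟨h11, h12⟩, h21⟩

/-! ### Weighted estimates -/

def YY {n : ℕ} (s p : ℝ) (x₀ : EE n) (R : ℝ) (w t : EE n → ℝ) : ℝ≥0∞ :=
  ∫⁻ x in ball x₀ R, ENNReal.ofReal (|w x| ^ p * (t x ^ 2 * (R - dist x x₀) ^ (-(s * p))))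

def wt {n : ℕ} (p : ℝ) (x₀ : EE n) (R : ℝ) (w t : EE n → ℝ) (z : EE n × EE n) : ℝ :=
  |w z.1| ^ p * (t z.1 * min (t z.1) (dist z.1 z.2 / (R - dist z.1 x₀))) ^ p

lemma measurable_wt {n : ℕ} (p : ℝ) (x₀ : EE n) (R : ℝ) {w t : EE n → ℝ} (hw : Measurable w)
    (ht : Measurable t) : Measurable (wt p x₀ R w t) := by
  unfold wt; fun_prop

lemma weight_upper {n : ℕ} {s p C : ℝ} (hp : 2 ≤ p) (hsp' : s * p < p) (hC0 : 0 < C)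
    (hC : ∀ (x : EE n) (ρ : ℝ), 0 < ρ →
      ∫⁻ y, ENNReal.ofReal (kap n s p (x, y)) * ENNReal.ofReal (min ρ (dist x y) ^ p) ≤
        ENNReal.ofReal (C * ρ ^ (p - s * p)))
    (x₀ : EE n) (R : ℝ) {w t : EE n → ℝ} (hw : Measurable w) (ht : Measurable t)
    (ht0 : ∀ x, 0 ≤ t x) (ht1 : ∀ x, t x ≤ 1) :
    ∫⁻ z in ball x₀ R ×ˢ univ, ENNReal.ofReal (wt p x₀ R w t z) ∂(nu n s p) ≤
      ENNReal.ofReal C * YY s p x₀ R w t := by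
  rw [lintegral_nu_prod n s p measurableSet_ball MeasurableSet.univ
    (measurable_wt p x₀ R hw ht).ennreal_ofReal]
  unfold YY
  rw [← lintegral_const_mul _ (by fun_prop)]
  refine setLIntegral_mono' measurableSet_ball fun x hx => ?_
  rw [Measure.restrict_univ]
  set d : ℝ := R - dist x x₀ with hd
  have hd0 : 0 < d := by rw [hd]; have := mem_ball.mp hx; linarith
  have hp0 : p ≠ 0 := by linarith
  rcases (ht0 x).eq_or_lt with h0 | h0
  · have : ∀ y, ENNReal.ofReal (kap n s p (x, y)) * ENNReal.ofReal (wt p x₀ R w t (x, y)) = 0 := by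
      intro y
      simp [wt, ← h0, Real.zero_rpow hp0]
    simp [this]
  · have hk := hC x (t x * d) (by positivity)
    have e : ∀ y, ENNReal.ofReal (kap n s p (x, y)) * ENNReal.ofReal (wt p x₀ R w t (x, y)) =
        ENNReal.ofReal (|w x| ^ p * (t x ^ p * (d ^ p)⁻¹)) *
        (ENNReal.ofReal (kap n s p (x, y)) * ENNReal.ofReal (min (t x * d) (dist x y) ^ p)) := by
      intro y
      rw [← ENNReal.ofReal_mul (kap_nonneg _ _ _ _), ← ENNReal.ofReal_mul (kap_nonneg _ _ _ _),
        ← ENNReal.ofReal_mul (by positivity)]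
      congr 1
      have e1 : min (t x) (dist x y / d) = min (t x * d) (dist x y) / d := by
        rw [← min_div_div_right hd0.le]
        congr 1
        field_simp
      simp only [wt]
      rw [← hd, e1, Real.mul_rpow (ht0 x) (by positivity), Real.div_rpow (by positivity) hd0.le]
      ring
    simp_rw [e]
    rw [lintegral_const_mul' _ _ ENNReal.ofReal_ne_top]
    refine (mul_le_mul_right hk _).trans ?_
    rw [← ENNReal.ofReal_mul (by positivity), ← ENNReal.ofReal_mul hC0.le]
    apply ENNReal.ofReal_le_ofReal
    have e2 : (t x * d) ^ (p - s * p) = t x ^ (p - s * p) * (d ^ p * d ^ (-(s * p))) := by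
      rw [Real.mul_rpow (ht0 x) hd0.le, ← Real.rpow_add hd0]; rfl
    have e3 : t x ^ p * t x ^ (p - s * p) ≤ t x ^ 2 := by
      rw [← Real.rpow_add h0, ← Real.rpow_natCast]
      apply Real.rpow_le_rpow_of_exponent_ge h0 (ht1 x)
      push_cast
      linarith
    have hdp : 0 < d ^ p := by positivity
    calc |w x| ^ p * (t x ^ p * (d ^ p)⁻¹) * (C * (t x * d) ^ (p - s * p))
        = C * (|w x| ^ p * ((t x ^ p * t x ^ (p - s * p)) * d ^ (-(s * p)))) := by
          rw [e2]; field_simp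
      _ ≤ _ := by gcongr

lemma cross_lower {n : ℕ} {s p c : ℝ} (hc0 : 0 < c)
    (x₀ : EE n) (R : ℝ)
    (hc : ∀ x : EE n, x ∈ ball x₀ R →
      ENNReal.ofReal (c * (R - dist x x₀) ^ (-(s * p))) ≤
        ∫⁻ y in (ball x₀ R)ᶜ, ENNReal.ofReal (kap n s p (x, y)))
    {w t : EE n → ℝ} (hw : Measurable w) (ht : Measurable t) :
    ENNReal.ofReal c * YY s p x₀ R w t ≤
      ∫⁻ z in ball x₀ R ×ˢ (ball x₀ R)ᶜ, ENNReal.ofReal (|w z.1| ^ p * t z.1 ^ 2) ∂(nu n s p) := by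
  rw [lintegral_nu_prod n s p measurableSet_ball measurableSet_ball.compl (by fun_prop)]
  unfold YY
  rw [← lintegral_const_mul _ (by fun_prop)]
  refine setLIntegral_mono' measurableSet_ball fun x hx => ?_
  simp only
  rw [lintegral_mul_const' _ _ ENNReal.ofReal_ne_top]
  refine le_trans (le_of_eq ?_) (mul_le_mul_left (hc x hx) _)
  have hd0 : 0 < R - dist x x₀ := by have := mem_ball.mp hx; linarith
  rw [← ENNReal.ofReal_mul hc0.le, ← ENNReal.ofReal_mul (by positivity)]
  congr 1
  ring

/-- the cut-off function -/
def cutt {n : ℕ} (x₀ : EE n) (R ε : ℝ) (x : EE n) : ℝ := tau ε (R - dist x x₀)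

lemma measurable_cutt {n : ℕ} (x₀ : EE n) (R ε : ℝ) : Measurable (cutt x₀ R ε) :=
  (measurable_tau ε).comp (by fun_prop)

lemma cutt_out {n : ℕ} (x₀ : EE n) {R ε : ℝ} (x : EE n) (hx : x ∉ closedBall x₀ (R - ε)) :
    cutt x₀ R ε x = 0 := by
  unfold cutt tau
  rw [if_neg]
  rw [mem_closedBall] at hx
  push Not at hx ⊢
  linarith

lemma cutt_out' {n : ℕ} (x₀ : EE n) {R ε : ℝ} (hε : 0 < ε) (x : EE n) (hx : x ∉ ball x₀ R) :
    cutt x₀ R ε x = 0 := by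
  apply cutt_out
  intro h
  exact hx (closedBall_subset_ball (by linarith) h)

lemma cutt_sub {n : ℕ} (x₀ : EE n) {R ε : ℝ} (hε : 0 < ε) (x y : EE n) (hx : x ∈ ball x₀ R) :
    cutt x₀ R ε x - cutt x₀ R ε y ≤ dist x y / (R - dist x x₀) := by
  have hd0 : 0 < R - dist x x₀ := by have := mem_ball.mp hx; linarith
  refine (tau_sub_le hε hd0).trans ?_
  gcongr
  have : R - dist x x₀ - (R - dist y x₀) = dist y x₀ - dist x x₀ := by ring
  rw [this, abs_sub_comm]
  exact abs_dist_sub_le x y x₀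

def phi {n : ℕ} (x₀ : EE n) (R ε : ℝ) (w : EE n → ℝ) (x : EE n) : ℝ := w x * cutt x₀ R ε x ^ 2

lemma measurable_phi {n : ℕ} (x₀ : EE n) (R ε : ℝ) {w : EE n → ℝ} (hw : Measurable w) :
    Measurable (phi x₀ R ε w) := by
  have := measurable_cutt x₀ R ε
  unfold phi; fun_prop

/-- pointwise bound inside the ball -/
lemma phi_pt {n : ℕ} {p : ℝ} (hp : 2 ≤ p) (x₀ : EE n) {R ε : ℝ} (hε : 0 < ε) (w : EE n → ℝ)
    (z : EE n × EE n) (hz : z ∈ ball x₀ R ×ˢ ball x₀ R) :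
    |phi x₀ R ε w z.1 - phi x₀ R ε w z.2| ^ p ≤ 8 ^ p * (|w z.1 - w z.2| ^ p +
      (wt p x₀ R w (cutt x₀ R ε) z + wt p x₀ R w (cutt x₀ R ε) z.swap)) := by
  have h1 : 0 < R - dist z.1 x₀ := by have := mem_ball.mp hz.1; linarith
  have h2 : 0 < R - dist z.2 x₀ := by have := mem_ball.mp hz.2; linarith
  exact cut_diff_pow hp (tau_nonneg hε) (tau_le_one hε) (tau_nonneg hε) (tau_le_one hε)
    (cutt_sub x₀ hε z.1 z.2 hz.1) (cutt_sub x₀ hε z.2 z.1 hz.2) (by positivity) (by positivity)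

lemma wt_nonneg {n : ℕ} {p : ℝ} (x₀ : EE n) (R : ℝ) (w t : EE n → ℝ) (ht0 : ∀ x, 0 ≤ t x)
    (z : EE n × EE n) (hz : z.1 ∈ ball x₀ R) : 0 ≤ wt p x₀ R w t z := by
  have h1 : 0 < R - dist z.1 x₀ := by have := mem_ball.mp hz; linarith
  have := ht0 z.1
  unfold wt; positivity

/-- integrated weights over ball × ball -/
lemma weight_sum {n : ℕ} {s p C : ℝ} (hp : 2 ≤ p) (hsp' : s * p < p) (hC0 : 0 < C)
    (hC : ∀ (x : EE n) (ρ : ℝ), 0 < ρ →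
      ∫⁻ y, ENNReal.ofReal (kap n s p (x, y)) * ENNReal.ofReal (min ρ (dist x y) ^ p) ≤
        ENNReal.ofReal (C * ρ ^ (p - s * p)))
    (x₀ : EE n) (R : ℝ) {w t : EE n → ℝ} (hw : Measurable w) (ht : Measurable t)
    (ht0 : ∀ x, 0 ≤ t x) (ht1 : ∀ x, t x ≤ 1) :
    ∫⁻ z in ball x₀ R ×ˢ ball x₀ R, ENNReal.ofReal (8 ^ p * (|w z.1 - w z.2| ^ p +
      (wt p x₀ R w t z + wt p x₀ R w t z.swap))) ∂(nu n s p) ≤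
    ENNReal.ofReal (8 ^ p) * (gagliardoE n s p (ball x₀ R) w +
      (ENNReal.ofReal C * YY s p x₀ R w t + ENNReal.ofReal C * YY s p x₀ R w t)) := by
  have hm := measurable_wt p x₀ R hw ht
  have hm' : Measurable fun z : EE n × EE n => wt p x₀ R w t z.swap := hm.comp measurable_swap
  have hB : MeasurableSet (ball x₀ R) := measurableSet_ball
  have hw1 : ∫⁻ z in ball x₀ R ×ˢ ball x₀ R, ENNReal.ofReal (wt p x₀ R w t z) ∂(nu n s p) ≤
      ENNReal.ofReal C * YY s p x₀ R w t :=
    (lintegral_mono_set (prod_mono subset_rfl (subset_univ _))).trans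
      (weight_upper hp hsp' hC0 hC x₀ R hw ht ht0 ht1)
  have hw2 := lintegral_nu_swap n s p hB hB hm.ennreal_ofReal
  calc _ = ∫⁻ z in ball x₀ R ×ˢ ball x₀ R, ENNReal.ofReal (8 ^ p) *
        (ENNReal.ofReal (|w z.1 - w z.2| ^ p) +
        (ENNReal.ofReal (wt p x₀ R w t z) + ENNReal.ofReal (wt p x₀ R w t z.swap))) ∂(nu n s p) := by
        refine setLIntegral_congr_fun (hB.prod hB) fun z hz => ?_
        have n1 := wt_nonneg (p := p) x₀ R w t ht0 z hz.1
        have n2 := wt_nonneg (p := p) x₀ R w t ht0 z.swap hz.2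
        rw [ENNReal.ofReal_mul (by positivity), ENNReal.ofReal_add (by positivity) (by positivity),
          ENNReal.ofReal_add n1 n2]
    _ ≤ _ := by
        rw [lintegral_const_mul _ (by fun_prop), lintegral_add_left (by fun_prop),
          lintegral_add_left (by fun_prop), gag_eq n s p hB hw, hw2]
        gcongr

lemma phi_BB {n : ℕ} {s p C : ℝ} (hp : 2 ≤ p) (hsp' : s * p < p) (hC0 : 0 < C)
    (hC : ∀ (x : EE n) (ρ : ℝ), 0 < ρ →
      ∫⁻ y, ENNReal.ofReal (kap n s p (x, y)) * ENNReal.ofReal (min ρ (dist x y) ^ p) ≤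
        ENNReal.ofReal (C * ρ ^ (p - s * p)))
    (x₀ : EE n) {R ε : ℝ} (hε : 0 < ε) {w : EE n → ℝ} (hw : Measurable w) :
    ∫⁻ z in ball x₀ R ×ˢ ball x₀ R,
      ENNReal.ofReal (|phi x₀ R ε w z.1 - phi x₀ R ε w z.2| ^ p) ∂(nu n s p) ≤
    ENNReal.ofReal (8 ^ p) * (gagliardoE n s p (ball x₀ R) w +
      (ENNReal.ofReal C * YY s p x₀ R w (cutt x₀ R ε) +
        ENNReal.ofReal C * YY s p x₀ R w (cutt x₀ R ε))) := by
  refine le_trans ?_ (weight_sum hp hsp' hC0 hC x₀ R hw (measurable_cutt x₀ R ε)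
    (fun x => tau_nonneg hε) (fun x => tau_le_one hε))
  refine setLIntegral_mono' (measurableSet_ball.prod measurableSet_ball) fun z hz => ?_
  exact ENNReal.ofReal_le_ofReal (phi_pt hp x₀ hε w z hz)

lemma YY_lt_top {n : ℕ} {s p : ℝ} (hsp : 0 < s * p) (x₀ : EE n) {R ε : ℝ} (hε : 0 < ε)
    {w : EE n → ℝ} (hw : Measurable w)
    (hwp : (∫⁻ x in ball x₀ R, ENNReal.ofReal (|w x| ^ p)) < ⊤) :
    YY s p x₀ R w (cutt x₀ R ε) < ⊤ := by
  unfold YY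
  calc _ ≤ ∫⁻ x in ball x₀ R, ENNReal.ofReal (|w x| ^ p) * ENNReal.ofReal (ε ^ (-(s * p))) := by
        refine setLIntegral_mono' measurableSet_ball fun x hx => ?_
        have hd0 : 0 < R - dist x x₀ := by have := mem_ball.mp hx; linarith
        rw [← ENNReal.ofReal_mul (by positivity)]
        apply ENNReal.ofReal_le_ofReal
        gcongr
        by_cases h : x ∈ closedBall x₀ (R - ε)
        · have h1 : cutt x₀ R ε x ^ 2 ≤ 1 := pow_le_one₀ (tau_nonneg hε) (tau_le_one hε)
          have h2 : ε ≤ R - dist x x₀ := by rw [mem_closedBall] at h; linarith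
          have h3 : (R - dist x x₀) ^ (-(s * p)) ≤ ε ^ (-(s * p)) :=
            Real.rpow_le_rpow_of_nonpos hε h2 (by linarith)
          calc _ ≤ 1 * (R - dist x x₀) ^ (-(s * p)) := by gcongr
            _ ≤ _ := by rw [one_mul]; exact h3
        · rw [cutt_out x₀ x h]; simp; positivity
    _ = (∫⁻ x in ball x₀ R, ENNReal.ofReal (|w x| ^ p)) * ENNReal.ofReal (ε ^ (-(s * p))) :=
        lintegral_mul_const _ (by fun_prop)
    _ < ⊤ := ENNReal.mul_lt_top hwp ENNReal.ofReal_lt_top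

lemma phi_gag {n : ℕ} {s p C : ℝ} (hp : 2 ≤ p) (hsp : 0 < s * p) (hsp' : s * p < p) (hC0 : 0 < C)
    (hC : ∀ (x : EE n) (ρ : ℝ), 0 < ρ →
      ∫⁻ y, ENNReal.ofReal (kap n s p (x, y)) * ENNReal.ofReal (min ρ (dist x y) ^ p) ≤
        ENNReal.ofReal (C * ρ ^ (p - s * p)))
    (x₀ : EE n) {R ε : ℝ} (hε : 0 < ε) {w : EE n → ℝ} (hw : Measurable w)
    (hwp : (∫⁻ x in ball x₀ R, ENNReal.ofReal (|w x| ^ p)) < ⊤)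
    (hwg : gagliardoE n s p (ball x₀ R) w < ⊤) :
    gagliardoE n s p univ (phi x₀ R ε w) < ⊤ := by
  set B := ball x₀ R with hBd
  have hB : MeasurableSet B := measurableSet_ball
  have hmφ := measurable_phi x₀ R ε hw
  have hp0 : p ≠ 0 := by linarith
  have hY := YY_lt_top hsp x₀ hε hw hwp
  have hCY : ENNReal.ofReal C * YY s p x₀ R w (cutt x₀ R ε) < ⊤ :=
    ENNReal.mul_lt_top ENNReal.ofReal_lt_top hY
  set G : EE n × EE n → ℝ≥0∞ := fun z =>
    ENNReal.ofReal (|phi x₀ R ε w z.1 - phi x₀ R ε w z.2| ^ p) with hG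
  have hGm : Measurable G := by rw [hG]; fun_prop
  rw [gag_eq n s p MeasurableSet.univ hmφ]
  have hout : ∀ x, x ∉ B → phi x₀ R ε w x = 0 := fun x hx => by
    unfold phi; rw [cutt_out' x₀ hε x hx]; simp
  have h11 : ∫⁻ z in B ×ˢ B, G z ∂(nu n s p) < ⊤ := by
    refine (phi_BB hp hsp' hC0 hC x₀ hε hw).trans_lt ?_
    exact ENNReal.mul_lt_top ENNReal.ofReal_lt_top
      (ENNReal.add_lt_top.mpr ⟨hwg, ENNReal.add_lt_top.mpr ⟨hCY, hCY⟩⟩)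
  have h12 : ∫⁻ z in B ×ˢ Bᶜ, G z ∂(nu n s p) < ⊤ := by
    refine lt_of_le_of_lt ?_ ((weight_upper hp hsp' hC0 hC x₀ R hw (measurable_cutt x₀ R ε)
      (fun x => tau_nonneg hε) (fun x => tau_le_one hε)).trans_lt hCY)
    refine le_trans ?_ (lintegral_mono_set (prod_mono subset_rfl (subset_univ Bᶜ)))
    refine setLIntegral_mono' (hB.prod hB.compl) fun z hz => ?_
    apply ENNReal.ofReal_le_ofReal
    have ht0 : 0 ≤ cutt x₀ R ε z.1 := tau_nonneg hε
    have ht1 : cutt x₀ R ε z.1 ≤ 1 := tau_le_one hε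
    have hd0 : 0 < R - dist z.1 x₀ := by have := mem_ball.mp hz.1; linarith
    have hq : 1 ≤ dist z.1 z.2 / (R - dist z.1 x₀) := by
      rw [one_le_div hd0]
      have h2 : R ≤ dist z.2 x₀ := by
        have := hz.2
        rw [mem_compl_iff, hBd, mem_ball] at this
        linarith
      have := dist_triangle z.2 z.1 x₀
      rw [dist_comm z.2 z.1] at this
      linarith
    unfold wt
    rw [hout z.2 hz.2, sub_zero, min_eq_left (ht1.trans hq)]
    unfold phi
    rw [abs_mul, Real.mul_rpow (abs_nonneg _) (abs_nonneg _), 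
      abs_of_nonneg (by positivity : 0 ≤ cutt x₀ R ε z.1 ^ 2), sq]
  have hsymm : ∀ z : EE n × EE n, G z.swap = G z := by
    intro z
    simp only [hG, Prod.fst_swap, Prod.snd_swap]
    rw [abs_sub_comm]
  have h21 : ∫⁻ z in Bᶜ ×ˢ B, G z ∂(nu n s p) < ⊤ := by
    have := lintegral_nu_swap n s p hB hB.compl hGm
    simp_rw [hsymm] at this
    rw [this]; exact h12
  have h22 : ∫⁻ z in Bᶜ ×ˢ Bᶜ, G z ∂(nu n s p) = 0 := by
    rw [← lintegral_zero (μ := (nu n s p).restrict (Bᶜ ×ˢ Bᶜ))]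
    refine setLIntegral_congr_fun (hB.compl.prod hB.compl) fun z hz => ?_
    simp [hG, hout z.1 hz.1, hout z.2 hz.2, Real.zero_rpow hp0]
  have hcov : (univ ×ˢ univ : Set (EE n × EE n)) ⊆
      (B ×ˢ B ∪ B ×ˢ Bᶜ) ∪ (Bᶜ ×ˢ B ∪ Bᶜ ×ˢ Bᶜ) := by
    intro z _
    by_cases h1 : z.1 ∈ B <;> by_cases h2 : z.2 ∈ B <;> simp [h1, h2]
  calc ∫⁻ z in univ ×ˢ univ, G z ∂(nu n s p) ≤ _ := lintegral_mono_set hcov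
    _ ≤ _ := lintegral_union_le _ _ _
    _ ≤ _ := add_le_add (lintegral_union_le _ _ _) (lintegral_union_le _ _ _)
    _ < ⊤ := by
      rw [h22, add_zero]
      exact ENNReal.add_lt_top.mpr ⟨ENNReal.add_lt_top.mpr ⟨h11, h12⟩, h21⟩

/-! ### Testing the two equations -/

/-- The integrand of the difference of the two weak forms. -/
def AP {n : ℕ} (p : ℝ) (u v φ : EE n → ℝ) (z : EE n × EE n) : ℝ :=
  (JJ p (u z.1 - u z.2) - JJ p (v z.1 - v z.2)) * (φ z.1 - φ z.2)

lemma measurable_AP {n : ℕ} (p : ℝ) {u v φ : EE n → ℝ} (hu : Measurable u) (hv : Measurable v)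
    (hφ : Measurable φ) : Measurable (AP p u v φ) := by
  have := measurable_JJ p
  unfold AP; fun_prop

def PP {n : ℕ} (s p : ℝ) (x₀ : EE n) (R : ℝ) (w t : EE n → ℝ) : ℝ≥0∞ :=
  ∫⁻ z in (ball x₀ R ×ˢ ball x₀ R)ᶜ,
    ENNReal.ofReal (c0 p * (|w z.1 - w z.2| ^ p * (t z.1 ^ 2 + t z.2 ^ 2))) ∂(nu n s p)

lemma ae_nu {n : ℕ} (s p : ℝ) {P : EE n → Prop} (h : ∀ᵐ x, P x) :
    ∀ᵐ z ∂(nu n s p), P z.1 ∧ P z.2 := by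
  apply (nu_ac n s p).ae_le
  rw [Measure.volume_eq_prod]
  have h1 := Measure.quasiMeasurePreserving_fst (μ := (volume : Measure (EE n)))
    (ν := (volume : Measure (EE n))) |>.ae h
  have h2 := Measure.quasiMeasurePreserving_snd (μ := (volume : Measure (EE n)))
    (ν := (volume : Measure (EE n))) |>.ae h
  filter_upwards [h1, h2] with z a b using ⟨a, b⟩

lemma cross_lower2 {n : ℕ} {s p : ℝ} (x₀ : EE n) (R : ℝ) {w t : EE n → ℝ}
    (hae : ∀ᵐ x, x ∉ ball x₀ R → w x = 0) :
    ∫⁻ z in ball x₀ R ×ˢ (ball x₀ R)ᶜ, ENNReal.ofReal (|w z.1| ^ p * t z.1 ^ 2) ∂(nu n s p) ≤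
    ∫⁻ z in (ball x₀ R ×ˢ ball x₀ R)ᶜ,
      ENNReal.ofReal (|w z.1 - w z.2| ^ p * t z.1 ^ 2) ∂(nu n s p) := by
  have hB : MeasurableSet (ball x₀ R) := measurableSet_ball
  have hsub : ball x₀ R ×ˢ (ball x₀ R)ᶜ ⊆ (ball x₀ R ×ˢ ball x₀ R)ᶜ :=
    fun z hz hz' => hz.2 hz'.2
  refine le_trans ?_ (lintegral_mono_set hsub)
  refine lintegral_mono_ae ?_
  rw [ae_restrict_iff' (hB.prod hB.compl)]
  filter_upwards [ae_nu s p hae] with z hz hzB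
  rw [hz.2 hzB.2, sub_zero]

lemma AP_lower {n : ℕ} {p : ℝ} (hp : 2 ≤ p) (x₀ : EE n) {R ε : ℝ} (hε : 0 < ε) {u v : EE n → ℝ}
    (z : EE n × EE n) (hz : z ∉ ball x₀ R ×ˢ ball x₀ R)
    (h1 : z.1 ∉ ball x₀ R → u z.1 - v z.1 = 0) (h2 : z.2 ∉ ball x₀ R → u z.2 - v z.2 = 0) :
    c0 p * (|(u z.1 - v z.1) - (u z.2 - v z.2)| ^ p *
      (cutt x₀ R ε z.1 ^ 2 + cutt x₀ R ε z.2 ^ 2)) ≤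
    AP p u v (phi x₀ R ε fun x => u x - v x) z := by
  have hm := mono_JJ hp (u z.1 - u z.2) (v z.1 - v z.2)
  have e : u z.1 - u z.2 - (v z.1 - v z.2) = (u z.1 - v z.1) - (u z.2 - v z.2) := by ring
  rw [e] at hm
  unfold AP phi
  by_cases hz1 : z.1 ∈ ball x₀ R
  · have hz2 : z.2 ∉ ball x₀ R := fun h => hz ⟨hz1, h⟩
    rw [h2 hz2, sub_zero] at hm
    rw [h2 hz2, cutt_out' x₀ hε z.2 hz2]
    have := mul_le_mul_of_nonneg_right hm (sq_nonneg (cutt x₀ R ε z.1))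
    simp only [sub_zero]
    nlinarith
  · rw [h1 hz1, zero_sub] at hm
    rw [h1 hz1, cutt_out' x₀ hε z.1 hz1, zero_sub]
    have := mul_le_mul_of_nonneg_right hm (sq_nonneg (cutt x₀ R ε z.2))
    nlinarith

lemma test_step {n : ℕ} {s p C : ℝ} (hp : 2 ≤ p) (hsp : 0 < s * p) (hsp' : s * p < p) (hC0 : 0 < C)
    (hC : ∀ (x : EE n) (ρ : ℝ), 0 < ρ →
      ∫⁻ y, ENNReal.ofReal (kap n s p (x, y)) * ENNReal.ofReal (min ρ (dist x y) ^ p) ≤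
        ENNReal.ofReal (C * ρ ^ (p - s * p)))
    {Ω : Set (EE n)} {f u v : EE n → ℝ} {x₀ : EE n} {R ε : ℝ} (hε : 0 < ε)
    (hΩ : closedBall x₀ R ⊆ Ω)
    (hu : IsLocalWeakSolution n p s Ω f u)
    (hv : IsLocalWeakSolution n p s (ball x₀ R) (fun _ => 0) v)
    (hwp : (∫⁻ x in ball x₀ R, ENNReal.ofReal (|u x - v x| ^ p)) < ⊤)
    (hwg : gagliardoE n s p (ball x₀ R) (fun x => u x - v x) < ⊤)
    (hae : ∀ᵐ x, x ∉ ball x₀ R → u x - v x = 0)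
    (hF : (∫⁻ x in ball x₀ R, ENNReal.ofReal (|f x| * |u x - v x|)) < ⊤) :
    PP s p x₀ R (fun x => u x - v x) (cutt x₀ R ε) ≤
      ENNReal.ofReal ((∫⁻ x in ball x₀ R, ENNReal.ofReal (|f x| * |u x - v x|)).toReal -
        ∫ z in ball x₀ R ×ˢ ball x₀ R, AP p u v (phi x₀ R ε fun x => u x - v x) z ∂(nu n s p)) ∧
    0 ≤ (∫⁻ x in ball x₀ R, ENNReal.ofReal (|f x| * |u x - v x|)).toReal -
        ∫ z in ball x₀ R ×ˢ ball x₀ R, AP p u v (phi x₀ R ε fun x => u x - v x) z ∂(nu n s p) := by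
  obtain ⟨hum, huloc, hutail, hueq⟩ := hu
  obtain ⟨hvm, hvloc, hvtail, hveq⟩ := hv
  set w : EE n → ℝ := fun x => u x - v x with hwdef
  have hw : Measurable w := hum.sub hvm
  set φ := phi x₀ R ε w with hφdef
  have hφm : Measurable φ := measurable_phi x₀ R ε hw
  have hφg : gagliardoE n s p univ φ < ⊤ := phi_gag hp hsp hsp' hC0 hC x₀ hε hw hwp hwg
  have hp0 : p ≠ 0 := by linarith
  have hB : MeasurableSet (ball x₀ R) := measurableSet_ball
  have habs : ∀ x, |φ x| ≤ |w x| := by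
    intro x
    rw [hφdef]; unfold phi
    rw [abs_mul, abs_of_nonneg (sq_nonneg (cutt x₀ R ε x))]
    exact mul_le_of_le_one_right (abs_nonneg _) (pow_le_one₀ (tau_nonneg hε) (tau_le_one hε))
  have hφ0 : ∀ x, x ∉ closedBall x₀ (R - ε) → φ x = 0 := by
    intro x hx
    rw [hφdef]; unfold phi; rw [cutt_out x₀ x hx]; simp
  have hφB : ∀ x, x ∉ ball x₀ R → φ x = 0 := by
    intro x hx
    rw [hφdef]; unfold phi; rw [cutt_out' x₀ hε x hx]; simp
  have hφp : (∫⁻ x, ENNReal.ofReal (|φ x| ^ p)) < ⊤ := by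
    refine lt_of_le_of_lt ?_ hwp
    rw [← lintegral_indicator hB]
    refine lintegral_mono fun x => ?_
    by_cases hx : x ∈ ball x₀ R
    · rw [indicator_of_mem hx]
      exact ENNReal.ofReal_le_ofReal (Real.rpow_le_rpow (abs_nonneg _) (habs x) (by linarith))
    · rw [hφB x hx]; simp [Real.zero_rpow hp0]
  have hs1 : closedBall x₀ (R - ε) ⊆ ball x₀ R := closedBall_subset_ball (by linarith)
  have hs2 : closedBall x₀ (R - ε / 2) ⊆ ball x₀ R := closedBall_subset_ball (by linarith)
  have hBΩ : ball x₀ R ⊆ Ω := ball_subset_closedBall.trans hΩ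
  have hul := huloc _ (hs2.trans hBΩ) (isCompact_closedBall x₀ (R - ε / 2))
  have hvl := hvloc _ hs2 (isCompact_closedBall x₀ (R - ε / 2))
  have hiu := int_J hp hsp hum hφm x₀ (by linarith : R - ε < R - ε / 2) hul.1 hul.2 hutail hφ0 hφp hφg
  have hiv := int_J hp hsp hvm hφm x₀ (by linarith : R - ε < R - ε / 2) hvl.1 hvl.2 hvtail hφ0 hφp hφg
  have eu := hueq φ hφm ⟨_, isCompact_closedBall x₀ (R - ε), hs1.trans hBΩ, .of_forall hφ0⟩ hφp hφg
  have ev := hveq φ hφm ⟨_, isCompact_closedBall x₀ (R - ε), hs1, .of_forall hφ0⟩ hφp hφg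
  have bu := bochner_nu n s p hiu
  have bv := bochner_nu n s p hiv
  have eu' : ∫ z : EE n × EE n, JJ p (u z.1 - u z.2) * (φ z.1 - φ z.2) ∂(nu n s p) =
      ∫ x in Ω, f x * φ x := bu.symm.trans eu
  have ev' : ∫ z : EE n × EE n, JJ p (v z.1 - v z.2) * (φ z.1 - φ z.2) ∂(nu n s p) = 0 := by
    have := bv.symm.trans ev
    simpa using this
  have hAPe : AP p u v φ = fun z => JJ p (u z.1 - u z.2) * (φ z.1 - φ z.2) -
      JJ p (v z.1 - v z.2) * (φ z.1 - φ z.2) := by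
    funext z; unfold AP; ring
  have hAPi : Integrable (AP p u v φ) (nu n s p) := by rw [hAPe]; exact hiu.sub hiv
  have hAPint : ∫ z, AP p u v φ z ∂(nu n s p) = ∫ x in Ω, f x * φ x := by
    rw [hAPe, integral_sub hiu hiv, eu', ev', sub_zero]
  have hrhs : ∫ x in Ω, f x * φ x ≤
      (∫⁻ x in ball x₀ R, ENNReal.ofReal (|f x| * |w x|)).toReal := by
    have h1 : ‖∫ x in Ω, f x * φ x‖ₑ ≤ ∫⁻ x in ball x₀ R, ENNReal.ofReal (|f x| * |w x|) := by
      refine (enorm_integral_le_lintegral_enorm _).trans ?_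
      refine (setLIntegral_le_lintegral _ _).trans ?_
      rw [← lintegral_indicator hB]
      refine lintegral_mono fun x => ?_
      by_cases hx : x ∈ ball x₀ R
      · rw [indicator_of_mem hx, Real.enorm_eq_ofReal_abs, abs_mul]
        exact ENNReal.ofReal_le_ofReal (mul_le_mul_of_nonneg_left (habs x) (abs_nonneg _))
      · rw [hφB x hx]; simp
    rw [Real.enorm_eq_ofReal_abs] at h1
    exact (le_abs_self _).trans ((ENNReal.ofReal_le_iff_le_toReal hF.ne).mp h1)
  set S := ball x₀ R ×ˢ ball x₀ R with hS
  have hSm : MeasurableSet S := hB.prod hB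
  have hsplit := integral_add_compl hSm hAPi
  have hlow : ∀ᵐ z ∂((nu n s p).restrict Sᶜ),
      c0 p * (|w z.1 - w z.2| ^ p * (cutt x₀ R ε z.1 ^ 2 + cutt x₀ R ε z.2 ^ 2)) ≤
        AP p u v φ z := by
    rw [ae_restrict_iff' hSm.compl]
    filter_upwards [ae_nu s p hae] with z hz hzS
    exact AP_lower hp x₀ hε z hzS hz.1 hz.2
  have hnn : 0 ≤ᵐ[(nu n s p).restrict Sᶜ] AP p u v φ := by
    filter_upwards [hlow] with z hz
    refine le_trans ?_ hz
    have := (c0_pos p).le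
    positivity
  have hofR := ofReal_integral_eq_lintegral_ofReal hAPi.integrableOn.integrable hnn
  have hle : ∫ z in Sᶜ, AP p u v φ z ∂(nu n s p) ≤
      (∫⁻ x in ball x₀ R, ENNReal.ofReal (|f x| * |w x|)).toReal -
        ∫ z in S, AP p u v φ z ∂(nu n s p) := by linarith
  constructor
  · refine le_trans ?_ (ENNReal.ofReal_le_ofReal hle)
    rw [hofR]
    unfold PP
    refine lintegral_mono_ae ?_
    filter_upwards [hlow] with z hz using ENNReal.ofReal_le_ofReal hz
  · exact (integral_nonneg_of_ae hnn).trans hle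

/-! ### Uniform bound of the weighted norm -/

lemma absorb {Y A : ℝ≥0∞} {a b : ℝ} (hY : Y < ⊤) (ha : 0 < a) (hb : 0 ≤ b) (hab : 2 * b ≤ a)
    (h : ENNReal.ofReal a * Y ≤ A + ENNReal.ofReal b * Y) : Y ≤ ENNReal.ofReal (2 / a) * A := by
  by_cases hA : A = ⊤
  · rw [hA, ENNReal.mul_top (by simpa using by positivity)]; exact le_top
  obtain ⟨y, rfl⟩ : ∃ y : NNReal, Y = y := ⟨Y.toNNReal, (ENNReal.coe_toNNReal hY.ne).symm⟩
  obtain ⟨x, rfl⟩ : ∃ x : NNReal, A = x := ⟨A.toNNReal, (ENNReal.coe_toNNReal hA).symm⟩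
  rw [← ENNReal.ofReal_coe_nnreal, ← ENNReal.ofReal_coe_nnreal, ← ENNReal.ofReal_mul ha.le,
    ← ENNReal.ofReal_mul hb, ← ENNReal.ofReal_add x.coe_nonneg (mul_nonneg hb y.coe_nonneg),
    ENNReal.ofReal_le_ofReal_iff (add_nonneg x.coe_nonneg (mul_nonneg hb y.coe_nonneg))] at h
  rw [← ENNReal.ofReal_coe_nnreal, ← ENNReal.ofReal_coe_nnreal,
    ← ENNReal.ofReal_mul (by positivity)]
  apply ENNReal.ofReal_le_ofReal
  rw [div_mul_eq_mul_div, le_div_iff₀ ha]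
  have : 2 * b * (y : ℝ) ≤ a * y := mul_le_mul_of_nonneg_right hab y.coe_nonneg
  nlinarith

lemma AP_abs {n : ℕ} {p m : ℝ} (hp : 2 ≤ p) (hm : 1 ≤ m) (u v φ : EE n → ℝ) (z : EE n × EE n) :
    |AP p u v φ z| ≤ m * (|u z.1 - u z.2| ^ p + |v z.1 - v z.2| ^ p) +
      2 * m⁻¹ * |φ z.1 - φ z.2| ^ p := by
  unfold AP
  rw [abs_mul]
  have h1 := young_m hp (abs_nonneg (u z.1 - u z.2)) (abs_nonneg (φ z.1 - φ z.2)) hm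
  have h2 := young_m hp (abs_nonneg (v z.1 - v z.2)) (abs_nonneg (φ z.1 - φ z.2)) hm
  have h3 := abs_sub (JJ p (u z.1 - u z.2)) (JJ p (v z.1 - v z.2))
  rw [abs_JJ hp, abs_JJ hp] at h3
  have := mul_le_mul_of_nonneg_right h3 (abs_nonneg (φ z.1 - φ z.2))
  linarith

lemma AP_lint {n : ℕ} {s p m : ℝ} (hp : 2 ≤ p) (hm : 1 ≤ m) {B : Set (EE n)} (hB : MeasurableSet B)
    {u v φ : EE n → ℝ} (hu : Measurable u) (hv : Measurable v) (hφ : Measurable φ) :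
    ∫⁻ z in B ×ˢ B, ENNReal.ofReal |AP p u v φ z| ∂(nu n s p) ≤
      ENNReal.ofReal m * (gagliardoE n s p B u + gagliardoE n s p B v) +
      ENNReal.ofReal (2 * m⁻¹) * ∫⁻ z in B ×ˢ B, ENNReal.ofReal (|φ z.1 - φ z.2| ^ p) ∂(nu n s p) := by
  have hm0 : 0 < m := by linarith
  rw [gag_eq n s p hB hu, gag_eq n s p hB hv, ← lintegral_add_left (by fun_prop),
    ← lintegral_const_mul _ (by fun_prop), ← lintegral_const_mul _ (by fun_prop),
    ← lintegral_add_left (by fun_prop)]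
  refine lintegral_mono fun z => ?_
  simp only
  rw [← ENNReal.ofReal_add (by positivity) (by positivity), ← ENNReal.ofReal_mul hm0.le,
    ← ENNReal.ofReal_mul (by positivity), ← ENNReal.ofReal_add (by positivity) (by positivity)]
  exact ENNReal.ofReal_le_ofReal (AP_abs hp hm u v φ z)

lemma YY_PP {n : ℕ} {s p c : ℝ} (hc0 : 0 < c) (x₀ : EE n) (R : ℝ)
    (hc : ∀ x : EE n, x ∈ ball x₀ R →
      ENNReal.ofReal (c * (R - dist x x₀) ^ (-(s * p))) ≤
        ∫⁻ y in (ball x₀ R)ᶜ, ENNReal.ofReal (kap n s p (x, y)))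
    {w t : EE n → ℝ} (hw : Measurable w) (ht : Measurable t)
    (hae : ∀ᵐ x, x ∉ ball x₀ R → w x = 0) :
    ENNReal.ofReal (c0 p * c) * YY s p x₀ R w t ≤ PP s p x₀ R w t := by
  have h0 := c0_pos p
  rw [ENNReal.ofReal_mul h0.le, mul_assoc]
  calc _ ≤ ENNReal.ofReal (c0 p) * ∫⁻ z in (ball x₀ R ×ˢ ball x₀ R)ᶜ,
      ENNReal.ofReal (|w z.1 - w z.2| ^ p * t z.1 ^ 2) ∂(nu n s p) := by
        gcongr
        exact (cross_lower hc0 x₀ R hc hw ht).trans (cross_lower2 x₀ R hae)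
    _ ≤ _ := by
        unfold PP
        rw [← lintegral_const_mul _ (by fun_prop)]
        refine lintegral_mono fun z => ?_
        simp only
        rw [← ENNReal.ofReal_mul h0.le]
        apply ENNReal.ofReal_le_ofReal
        gcongr
        have := sq_nonneg (t z.2)
        linarith

lemma step1 {n : ℕ} {s p C c : ℝ} (hp : 2 ≤ p) (hsp : 0 < s * p) (hsp' : s * p < p) (hC0 : 0 < C)
    (hC : ∀ (x : EE n) (ρ : ℝ), 0 < ρ →
      ∫⁻ y, ENNReal.ofReal (kap n s p (x, y)) * ENNReal.ofReal (min ρ (dist x y) ^ p) ≤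
        ENNReal.ofReal (C * ρ ^ (p - s * p)))
    (hc0 : 0 < c)
    {Ω : Set (EE n)} {f u v : EE n → ℝ} {x₀ : EE n} {R : ℝ}
    (hc : ∀ x : EE n, x ∈ ball x₀ R →
      ENNReal.ofReal (c * (R - dist x x₀) ^ (-(s * p))) ≤
        ∫⁻ y in (ball x₀ R)ᶜ, ENNReal.ofReal (kap n s p (x, y)))
    (hΩ : closedBall x₀ R ⊆ Ω)
    (hu : IsLocalWeakSolution n p s Ω f u)
    (hv : IsLocalWeakSolution n p s (ball x₀ R) (fun _ => 0) v)
    (hug : gagliardoE n s p (ball x₀ R) u < ⊤)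
    (hvg : gagliardoE n s p (ball x₀ R) v < ⊤)
    (hwp : (∫⁻ x in ball x₀ R, ENNReal.ofReal (|u x - v x| ^ p)) < ⊤)
    (hwg : gagliardoE n s p (ball x₀ R) (fun x => u x - v x) < ⊤)
    (hae : ∀ᵐ x, x ∉ ball x₀ R → u x - v x = 0)
    (hF : (∫⁻ x in ball x₀ R, ENNReal.ofReal (|f x| * |u x - v x|)) < ⊤) :
    ∃ M : ℝ≥0∞, M < ⊤ ∧ ∀ ε : ℝ, 0 < ε →
      YY s p x₀ R (fun x => u x - v x) (cutt x₀ R ε) ≤ M := by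
  have hum := hu.1
  have hvm := hv.1
  have hw : Measurable (fun x => u x - v x) := hum.sub hvm
  have h0 := c0_pos p
  set a : ℝ := c0 p * c with ha
  have ha0 : 0 < a := by positivity
  have h8 : (0 : ℝ) < 8 ^ p := by positivity
  set m : ℝ := 1 + 8 * 8 ^ p * C / a with hm
  have hm1 : 1 ≤ m := by
    have : 0 ≤ 8 * 8 ^ p * C / a := by positivity
    linarith
  have hm0 : 0 < m := by linarith
  set b : ℝ := 2 * m⁻¹ * 8 ^ p * (2 * C) with hb
  have hb0 : 0 ≤ b := by positivity
  have hab : 2 * b ≤ a := by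
    have h1 : 8 * 8 ^ p * C ≤ m * a := by
      rw [hm, add_mul, div_mul_cancel₀ _ ha0.ne']; linarith
    have : 2 * b = (8 * 8 ^ p * C) / m := by rw [hb]; field_simp; ring
    rw [this, div_le_iff₀ hm0]; linarith
  set F0 := ∫⁻ x in ball x₀ R, ENNReal.ofReal (|f x| * |u x - v x|) with hF0
  set A : ℝ≥0∞ := F0 + (ENNReal.ofReal m * (gagliardoE n s p (ball x₀ R) u +
    gagliardoE n s p (ball x₀ R) v) + ENNReal.ofReal (2 * m⁻¹ * 8 ^ p) *
      gagliardoE n s p (ball x₀ R) (fun x => u x - v x)) with hA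
  have hAtop : A < ⊤ := by
    rw [hA]
    refine ENNReal.add_lt_top.mpr ⟨hF, ENNReal.add_lt_top.mpr ⟨ENNReal.mul_lt_top
      ENNReal.ofReal_lt_top (ENNReal.add_lt_top.mpr ⟨hug, hvg⟩), ENNReal.mul_lt_top
      ENNReal.ofReal_lt_top hwg⟩⟩
  refine ⟨ENNReal.ofReal (2 / a) * A, ENNReal.mul_lt_top ENNReal.ofReal_lt_top hAtop, ?_⟩
  intro ε hε
  have ht := (test_step hp hsp hsp' hC0 hC hε hΩ hu hv hwp hwg hae hF).1
  have hY := YY_PP (s := s) (p := p) hc0 x₀ R hc hw (measurable_cutt x₀ R ε) hae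
  refine absorb (YY_lt_top hsp x₀ hε hw hwp) ha0 hb0 hab ?_
  refine hY.trans (ht.trans ?_)
  have hφ := measurable_phi x₀ R ε hw
  have hlint := (AP_lint (s := s) hp hm1 (measurableSet_ball (x := x₀) (ε := R)) hum hvm hφ).trans
    (add_le_add le_rfl (mul_le_mul_right (phi_BB hp hsp' hC0 hC x₀ (R := R) hε hw) _))
  have hnorm : ENNReal.ofReal (- ∫ z in ball x₀ R ×ˢ ball x₀ R,
      AP p u v (phi x₀ R ε fun x => u x - v x) z ∂(nu n s p)) ≤
      ∫⁻ z in ball x₀ R ×ˢ ball x₀ R, ENNReal.ofReal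
        |AP p u v (phi x₀ R ε fun x => u x - v x) z| ∂(nu n s p) := by
    refine le_trans ?_ (le_trans (enorm_integral_le_lintegral_enorm (μ := (nu n s p).restrict
      (ball x₀ R ×ˢ ball x₀ R)) (AP p u v (phi x₀ R ε fun x => u x - v x))) ?_)
    · rw [Real.enorm_eq_ofReal_abs]
      exact ENNReal.ofReal_le_ofReal (neg_le_abs _)
    · refine lintegral_mono fun z => ?_
      rw [Real.enorm_eq_ofReal_abs]
  rw [sub_eq_add_neg]
  refine ENNReal.ofReal_add_le.trans ?_
  rw [ENNReal.ofReal_toReal hF.ne]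
  refine (add_le_add le_rfl (hnorm.trans hlint)).trans (le_of_eq ?_)
  rw [hA, hb, ENNReal.ofReal_mul (by positivity : 0 ≤ 2 * m⁻¹ * 8 ^ p),
    ENNReal.ofReal_mul (by positivity : 0 ≤ 2 * m⁻¹), ENNReal.ofReal_mul (by positivity : (0:ℝ) ≤ 2),
    ENNReal.ofReal_mul (by positivity : (0:ℝ) ≤ 2)]
  have : ENNReal.ofReal (2 : ℝ) = 2 := by simp
  rw [this]
  ring

/-! ### Passing to the limit in the cutoff -/

def eps (R : ℝ) (k : ℕ) : ℝ := R * (1 / ((k : ℝ) + 1))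

lemma eps_pos {R : ℝ} (hR : 0 < R) (k : ℕ) : 0 < eps R k := by unfold eps; positivity

lemma eps_lim (R : ℝ) : Filter.Tendsto (eps R) Filter.atTop (nhds 0) := by
  have := (tendsto_one_div_add_atTop_nhds_zero_nat (𝕜 := ℝ)).const_mul R
  rwa [mul_zero] at this

lemma cutt_lim {n : ℕ} (x₀ : EE n) (R : ℝ) (x : EE n) (hx : x ∈ ball x₀ R) :
    Filter.Tendsto (fun k => cutt x₀ R (eps R k) x) Filter.atTop (nhds 1) := by
  have hd : 0 < R - dist x x₀ := by have := mem_ball.mp hx; linarith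
  have h1 : Filter.Tendsto (fun k => 1 - eps R k / (R - dist x x₀)) Filter.atTop (nhds 1) := by
    have := ((eps_lim R).div_const (R - dist x x₀)).const_sub 1
    simpa using this
  refine h1.congr' ?_
  filter_upwards [(eps_lim R).eventually_lt_const hd] with k hk
  unfold cutt tau
  rw [if_pos hk]

lemma fatou_le {α : Type*} [MeasurableSpace α] {μ : Measure α} {F : ℕ → α → ℝ≥0∞} {g : α → ℝ≥0∞}
    {a : ℕ → ℝ≥0∞} {L : ℝ≥0∞} (hF : ∀ k, Measurable (F k))
    (hlim : ∀ᵐ x ∂μ, Filter.Tendsto (fun k => F k x) Filter.atTop (nhds (g x)))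
    (ha : ∀ k, ∫⁻ x, F k x ∂μ ≤ a k) (hL : Filter.Tendsto a Filter.atTop (nhds L)) :
    ∫⁻ x, g x ∂μ ≤ L := by
  calc ∫⁻ x, g x ∂μ = ∫⁻ x, Filter.liminf (fun k => F k x) Filter.atTop ∂μ := by
        refine lintegral_congr_ae ?_
        filter_upwards [hlim] with x hx using hx.liminf_eq.symm
    _ ≤ Filter.liminf (fun k => ∫⁻ x, F k x ∂μ) Filter.atTop := lintegral_liminf_le hF
    _ ≤ Filter.liminf a Filter.atTop := Filter.liminf_le_liminf (Filter.Eventually.of_forall ha)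
    _ = L := hL.liminf_eq

lemma int_of {α : Type*} [MeasurableSpace α] {μ : Measure α} {S : Set α} (hS : MeasurableSet S)
    {F : α → ℝ} (hF : Measurable F) (h0 : ∀ z ∈ S, 0 ≤ F z)
    (h : ∫⁻ z in S, ENNReal.ofReal (F z) ∂μ < ⊤) : Integrable F (μ.restrict S) := by
  refine ⟨hF.aestronglyMeasurable, ?_⟩
  rw [hasFiniteIntegral_iff_ofReal]
  · exact h
  · rw [Filter.EventuallyLE, ae_restrict_iff' hS]
    exact Filter.Eventually.of_forall h0

lemma YY_one_le {n : ℕ} {s p : ℝ} {x₀ : EE n} {R : ℝ} (hR : 0 < R) {w : EE n → ℝ}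
    (hw : Measurable w) {M : ℝ≥0∞}
    (hM : ∀ ε : ℝ, 0 < ε → YY s p x₀ R w (cutt x₀ R ε) ≤ M) :
    YY s p x₀ R w (fun _ => 1) ≤ M := by
  have hmc := fun k => measurable_cutt x₀ R (eps R k)
  unfold YY at hM ⊢
  refine fatou_le (fun k => ?_) ?_ (fun k => hM _ (eps_pos hR k)) tendsto_const_nhds
  · have := hmc k
    fun_prop
  · rw [ae_restrict_iff' measurableSet_ball]
    refine Filter.Eventually.of_forall fun x hx => ?_
    refine ENNReal.tendsto_ofReal ?_
    exact (((cutt_lim x₀ R x hx).pow 2).mul_const _).const_mul _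

lemma wt_le_one {n : ℕ} {p : ℝ} (hp : 2 ≤ p) (x₀ : EE n) {R ε : ℝ} (hε : 0 < ε) (w : EE n → ℝ)
    (z : EE n × EE n) (hz : z.1 ∈ ball x₀ R) :
    wt p x₀ R w (cutt x₀ R ε) z ≤ wt p x₀ R w (fun _ => 1) z := by
  have hd : 0 < R - dist z.1 x₀ := by have := mem_ball.mp hz; linarith
  have h0 : 0 ≤ cutt x₀ R ε z.1 := tau_nonneg hε
  have h1 : cutt x₀ R ε z.1 ≤ 1 := tau_le_one hε
  have hq : 0 ≤ dist z.1 z.2 / (R - dist z.1 x₀) := by positivity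
  unfold wt
  have : cutt x₀ R ε z.1 * min (cutt x₀ R ε z.1) (dist z.1 z.2 / (R - dist z.1 x₀)) ≤
      1 * min 1 (dist z.1 z.2 / (R - dist z.1 x₀)) :=
    mul_le_mul h1 (min_le_min_right _ h1) (le_min h0 hq) zero_le_one
  have h3 : 0 ≤ cutt x₀ R ε z.1 * min (cutt x₀ R ε z.1) (dist z.1 z.2 / (R - dist z.1 x₀)) :=
    mul_nonneg h0 (le_min h0 hq)
  gcongr

lemma AP_lim {n : ℕ} {s p C : ℝ} (hp : 2 ≤ p) (hsp' : s * p < p) (hC0 : 0 < C)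
    (hC : ∀ (x : EE n) (ρ : ℝ), 0 < ρ →
      ∫⁻ y, ENNReal.ofReal (kap n s p (x, y)) * ENNReal.ofReal (min ρ (dist x y) ^ p) ≤
        ENNReal.ofReal (C * ρ ^ (p - s * p)))
    {u v w : EE n → ℝ} {x₀ : EE n} {R : ℝ} (hR : 0 < R)
    (hum : Measurable u) (hvm : Measurable v) (hw : Measurable w)
    (hug : gagliardoE n s p (ball x₀ R) u < ⊤)
    (hvg : gagliardoE n s p (ball x₀ R) v < ⊤)
    (hwg : gagliardoE n s p (ball x₀ R) w < ⊤)
    (hY : YY s p x₀ R w (fun _ => 1) < ⊤) :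
    Filter.Tendsto (fun k => ∫ z in ball x₀ R ×ˢ ball x₀ R,
      AP p u v (phi x₀ R (eps R k) w) z ∂(nu n s p)) Filter.atTop
      (nhds (∫ z in ball x₀ R ×ˢ ball x₀ R, AP p u v w z ∂(nu n s p))) := by
  have hB : MeasurableSet (ball x₀ R) := measurableSet_ball
  have hBB := hB.prod hB
  have hm1 := measurable_wt p x₀ R hw (measurable_const (a := (1 : ℝ)))
  have hm2 : Measurable fun z : EE n × EE n => wt p x₀ R w (fun _ => 1) z.swap :=
    hm1.comp measurable_swap
  have hW := weight_sum hp hsp' hC0 hC x₀ R hw (measurable_const (a := (1 : ℝ)))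
    (fun _ => zero_le_one) (fun _ => le_rfl)
  have hCY : ENNReal.ofReal C * YY s p x₀ R w (fun _ => 1) < ⊤ :=
    ENNReal.mul_lt_top ENNReal.ofReal_lt_top hY
  have hWtop := hW.trans_lt (ENNReal.mul_lt_top ENNReal.ofReal_lt_top
    (ENNReal.add_lt_top.mpr ⟨hwg, ENNReal.add_lt_top.mpr ⟨hCY, hCY⟩⟩))
  have hw0 : ∀ z ∈ ball x₀ R ×ˢ ball x₀ R, 0 ≤ 8 ^ p * (|w z.1 - w z.2| ^ p +
      (wt p x₀ R w (fun _ => 1) z + wt p x₀ R w (fun _ => 1) z.swap)) := by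
    intro z hz
    have h1 := wt_nonneg (p := p) x₀ R w (fun _ => 1) (fun _ => zero_le_one) z hz.1
    have h2 := wt_nonneg (p := p) x₀ R w (fun _ => 1) (fun _ => zero_le_one) z.swap hz.2
    positivity
  have i1 := int_of (μ := nu n s p) hBB (by fun_prop) hw0 hWtop
  rw [gag_eq n s p hB hum] at hug
  rw [gag_eq n s p hB hvm] at hvg
  have i2 := int_of hBB (by fun_prop) (fun z _ => by positivity) hug
  have i3 := int_of hBB (by fun_prop) (fun z _ => by positivity) hvg
  refine tendsto_integral_of_dominated_convergence _
    (fun k => (measurable_AP p hum hvm (measurable_phi x₀ R _ hw)).aestronglyMeasurable)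
    ((i2.add i3).add (i1.const_mul 2)) ?_ ?_
  · intro k
    rw [ae_restrict_iff' hBB]
    refine Filter.Eventually.of_forall fun z hz => ?_
    have h1 := AP_abs hp le_rfl u v (phi x₀ R (eps R k) w) z
    have h2 := phi_pt hp x₀ (eps_pos hR k) w z hz
    have h3 := wt_le_one hp x₀ (eps_pos hR k) w z hz.1
    have h4 := wt_le_one hp x₀ (eps_pos hR k) w z.swap hz.2
    have h8 : (0 : ℝ) < 8 ^ p := by positivity
    have h5 := mul_le_mul_of_nonneg_left (add_le_add (le_refl (|w z.1 - w z.2| ^ p))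
      (add_le_add h3 h4)) h8.le
    simp only [Pi.add_apply]
    rw [Real.norm_eq_abs]
    rw [one_mul, inv_one, mul_one] at h1
    linarith
  · rw [ae_restrict_iff' hBB]
    refine Filter.Eventually.of_forall fun z hz => ?_
    have h1 := ((cutt_lim x₀ R z.1 hz.1).pow 2).const_mul (w z.1)
    have h2 := ((cutt_lim x₀ R z.2 hz.2).pow 2).const_mul (w z.2)
    have := (h1.sub h2).const_mul (JJ p (u z.1 - u z.2) - JJ p (v z.1 - v z.2))
    simpa [AP, phi] using this

lemma PP_lim {n : ℕ} {s p : ℝ} (hp : 2 ≤ p) {w : EE n → ℝ} {x₀ : EE n} {R : ℝ} (hR : 0 < R)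
    (hw : Measurable w) (hae : ∀ᵐ x, x ∉ ball x₀ R → w x = 0) {a : ℕ → ℝ≥0∞} {L : ℝ≥0∞}
    (ha : ∀ k, PP s p x₀ R w (cutt x₀ R (eps R k)) ≤ a k)
    (hL : Filter.Tendsto a Filter.atTop (nhds L)) :
    ∫⁻ z in (ball x₀ R ×ˢ ball x₀ R)ᶜ, ENNReal.ofReal (c0 p * |w z.1 - w z.2| ^ p) ∂(nu n s p)
      ≤ L := by
  have hB : MeasurableSet (ball x₀ R) := measurableSet_ball
  have hBB := hB.prod hB
  unfold PP at ha
  refine fatou_le (fun k => ?_) ?_ ha hL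
  · have := measurable_cutt x₀ R (eps R k)
    fun_prop
  · rw [ae_restrict_iff' hBB.compl]
    filter_upwards [ae_nu s p hae] with z hz hzB
    refine ENNReal.tendsto_ofReal (Filter.Tendsto.const_mul _ ?_)
    by_cases h1 : z.1 ∈ ball x₀ R
    · have h2 : z.2 ∉ ball x₀ R := fun h => hzB ⟨h1, h⟩
      have e : ∀ k, cutt x₀ R (eps R k) z.2 = 0 := fun k => cutt_out' x₀ (eps_pos hR k) z.2 h2
      simp only [e]
      have := ((cutt_lim x₀ R z.1 h1).pow 2).const_mul (|w z.1 - w z.2| ^ p)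
      simpa using this
    · have e : ∀ k, cutt x₀ R (eps R k) z.1 = 0 := fun k => cutt_out' x₀ (eps_pos hR k) z.1 h1
      simp only [e]
      by_cases h2 : z.2 ∈ ball x₀ R
      · have := ((cutt_lim x₀ R z.2 h2).pow 2).const_mul (|w z.1 - w z.2| ^ p)
        simpa using this
      · rw [hz.1 h1, hz.2 h2]
        simp [Real.zero_rpow (by linarith : p ≠ 0)]

lemma step2 {n : ℕ} {s p C c : ℝ} (hp : 2 ≤ p) (hsp : 0 < s * p) (hsp' : s * p < p) (hC0 : 0 < C)
    (hC : ∀ (x : EE n) (ρ : ℝ), 0 < ρ →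
      ∫⁻ y, ENNReal.ofReal (kap n s p (x, y)) * ENNReal.ofReal (min ρ (dist x y) ^ p) ≤
        ENNReal.ofReal (C * ρ ^ (p - s * p)))
    (hc0 : 0 < c)
    {Ω : Set (EE n)} {f u v : EE n → ℝ} {x₀ : EE n} {R : ℝ} (hR : 0 < R)
    (hc : ∀ x : EE n, x ∈ ball x₀ R →
      ENNReal.ofReal (c * (R - dist x x₀) ^ (-(s * p))) ≤
        ∫⁻ y in (ball x₀ R)ᶜ, ENNReal.ofReal (kap n s p (x, y)))
    (hΩ : closedBall x₀ R ⊆ Ω)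
    (hu : IsLocalWeakSolution n p s Ω f u)
    (hv : IsLocalWeakSolution n p s (ball x₀ R) (fun _ => 0) v)
    (hug : gagliardoE n s p (ball x₀ R) u < ⊤)
    (hvg : gagliardoE n s p (ball x₀ R) v < ⊤)
    (hwp : (∫⁻ x in ball x₀ R, ENNReal.ofReal (|u x - v x| ^ p)) < ⊤)
    (hwg : gagliardoE n s p (ball x₀ R) (fun x => u x - v x) < ⊤)
    (hae : ∀ᵐ x, x ∉ ball x₀ R → u x - v x = 0)
    (hF : (∫⁻ x in ball x₀ R, ENNReal.ofReal (|f x| * |u x - v x|)) < ⊤) :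
    ENNReal.ofReal (c0 p) * gagliardoE n s p univ (fun x => u x - v x) ≤
      ∫⁻ x in ball x₀ R, ENNReal.ofReal (|f x| * |u x - v x|) := by
  obtain ⟨M, hMtop, hM⟩ := step1 hp hsp hsp' hC0 hC hc0 hc hΩ hu hv hug hvg hwp hwg hae hF
  have hum := hu.1
  have hvm := hv.1
  have hw : Measurable (fun x => u x - v x) := hum.sub hvm
  have hB : MeasurableSet (ball x₀ R) := measurableSet_ball
  have hBB := hB.prod hB
  have hY := (YY_one_le hR hw hM).trans_lt hMtop
  have hlim := AP_lim hp hsp' hC0 hC hR hum hvm hw hug hvg hwg hY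
  have hts := fun k => test_step hp hsp hsp' hC0 hC (eps_pos hR k) hΩ hu hv hwp hwg hae hF
  set F0 := ∫⁻ x in ball x₀ R, ENNReal.ofReal (|f x| * |u x - v x|) with hF0
  have hlim' := hlim.const_sub F0.toReal
  have hP := PP_lim hp hR hw hae (fun k => (hts k).1) (ENNReal.tendsto_ofReal hlim')
  have hpos := ge_of_tendsto' hlim' (fun k => (hts k).2)
  set I := ∫ z in ball x₀ R ×ˢ ball x₀ R, AP p u v (fun x => u x - v x) z ∂(nu n s p) with hI
  have hc0p := c0_pos p
  have hlow : ∀ z : EE n × EE n, c0 p * |(u z.1 - v z.1) - (u z.2 - v z.2)| ^ p ≤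
      AP p u v (fun x => u x - v x) z := by
    intro z
    have hm := mono_JJ hp (u z.1 - u z.2) (v z.1 - v z.2)
    have e : u z.1 - u z.2 - (v z.1 - v z.2) = (u z.1 - v z.1) - (u z.2 - v z.2) := by ring
    rw [e] at hm
    exact hm
  have hAP0 : ∀ z, 0 ≤ AP p u v (fun x => u x - v x) z := fun z =>
    le_trans (by positivity) (hlow z)
  have hAPint : Integrable (AP p u v (fun x => u x - v x))
      ((nu n s p).restrict (ball x₀ R ×ˢ ball x₀ R)) := by
    refine int_of hBB (measurable_AP p hum hvm hw) (fun z _ => hAP0 z) ?_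
    have h1 := AP_lint (s := s) hp le_rfl hB hum hvm hw
    rw [← gag_eq n s p hB hw] at h1
    refine lt_of_le_of_lt (lintegral_mono fun z => ENNReal.ofReal_le_ofReal (le_abs_self _))
      (h1.trans_lt ?_)
    refine ENNReal.add_lt_top.mpr ⟨ENNReal.mul_lt_top ENNReal.ofReal_lt_top
      (ENNReal.add_lt_top.mpr ⟨hug, hvg⟩), ENNReal.mul_lt_top ENNReal.ofReal_lt_top hwg⟩
  have hI0 : 0 ≤ I := integral_nonneg hAP0
  have hin : ∫⁻ z in ball x₀ R ×ˢ ball x₀ R,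
      ENNReal.ofReal (c0 p * |(u z.1 - v z.1) - (u z.2 - v z.2)| ^ p) ∂(nu n s p) ≤
      ENNReal.ofReal I := by
    rw [hI, ofReal_integral_eq_lintegral_ofReal hAPint (Filter.Eventually.of_forall hAP0)]
    exact lintegral_mono fun z => ENNReal.ofReal_le_ofReal (hlow z)
  rw [gag_eq n s p MeasurableSet.univ hw, univ_prod_univ, Measure.restrict_univ,
    ← lintegral_const_mul _ (by fun_prop)]
  simp only [← ENNReal.ofReal_mul hc0p.le]
  rw [← lintegral_add_compl _ hBB]
  refine (add_le_add hin hP).trans ?_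
  rw [← ENNReal.ofReal_add hI0 hpos]
  rw [add_sub_cancel, ENNReal.ofReal_toReal hF.ne]

/-! ### Conclusion -/

lemma young_fw {p s R m : ℝ} (hp : 2 ≤ p) (hR : 0 < R) (hm : 1 ≤ m) (a b : ℝ) :
    |a| * |b| ≤ m * R ^ (s * (p / (p - 1))) * |a| ^ (p / (p - 1)) +
      m⁻¹ * R ^ (-(s * p)) * |b| ^ p := by
  have hp1 : 0 < p - 1 := by linarith
  have hRs : 0 < R ^ s := by positivity
  have hX : 0 ≤ R ^ s * |a| := by positivity
  have hy : 0 ≤ R ^ (-s) * |b| := by positivity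
  have h := young_m hp (Real.rpow_nonneg hX (1 / (p - 1))) hy hm
  rw [← Real.rpow_mul hX, ← Real.rpow_mul hX, one_div_mul_cancel hp1.ne', Real.rpow_one,
    one_div_mul_eq_div, Real.mul_rpow hRs.le (abs_nonneg a),
    Real.mul_rpow (by positivity) (abs_nonneg b), ← Real.rpow_mul hR.le, ← Real.rpow_mul hR.le] at h
  have e : R ^ s * |a| * (R ^ (-s) * |b|) = |a| * |b| := by
    rw [Real.rpow_neg hR.le]
    field_simp
  rw [e, neg_mul] at h
  linarith

lemma lp_lower {n : ℕ} {s p c : ℝ} (hp : 2 ≤ p) (hsp : 0 < s * p) (hc0 : 0 < c) (x₀ : EE n) {R : ℝ}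
    (hc : ∀ x : EE n, x ∈ ball x₀ R →
      ENNReal.ofReal (c * (R - dist x x₀) ^ (-(s * p))) ≤
        ∫⁻ y in (ball x₀ R)ᶜ, ENNReal.ofReal (kap n s p (x, y)))
    {w : EE n → ℝ} (hw : Measurable w)
    (hae : ∀ᵐ x, x ∉ ball x₀ R → w x = 0) :
    ∫⁻ x in ball x₀ R, ENNReal.ofReal (R ^ (-(s * p)) * |w x| ^ p) ≤
      ENNReal.ofReal c⁻¹ * gagliardoE n s p univ w := by
  have h1 : ∫⁻ x in ball x₀ R, ENNReal.ofReal (R ^ (-(s * p)) * |w x| ^ p) ≤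
      YY s p x₀ R w (fun _ => 1) := by
    unfold YY
    refine setLIntegral_mono' measurableSet_ball fun x hx => ?_
    apply ENNReal.ofReal_le_ofReal
    have hd : 0 < R - dist x x₀ := by have := mem_ball.mp hx; linarith
    have h2 : R ^ (-(s * p)) ≤ (R - dist x x₀) ^ (-(s * p)) :=
      Real.rpow_le_rpow_of_nonpos hd (by linarith [dist_nonneg (x := x) (y := x₀)]) (by linarith)
    rw [one_pow, one_mul, mul_comm]
    gcongr
  have h2 := (cross_lower hc0 x₀ R hc hw (measurable_const (a := (1 : ℝ)))).trans
    (cross_lower2 (s := s) (p := p) (t := fun _ => 1) x₀ R hae)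
  have h3 : ∫⁻ z in (ball x₀ R ×ˢ ball x₀ R)ᶜ,
      ENNReal.ofReal (|w z.1 - w z.2| ^ p * (1 : ℝ) ^ 2) ∂(nu n s p) ≤
      gagliardoE n s p univ w := by
    rw [gag_eq n s p MeasurableSet.univ hw, univ_prod_univ, Measure.restrict_univ]
    simp only [one_pow, mul_one]
    exact setLIntegral_le_lintegral _ _
  calc _ ≤ YY s p x₀ R w (fun _ => 1) := h1
    _ = ENNReal.ofReal c⁻¹ * (ENNReal.ofReal c * YY s p x₀ R w (fun _ => 1)) := by
        rw [← mul_assoc, ← ENNReal.ofReal_mul (by positivity), inv_mul_cancel₀ hc0.ne',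
          ENNReal.ofReal_one, one_mul]
    _ ≤ _ := by
        gcongr
        exact h2.trans h3

lemma fw_bound {n : ℕ} {p s R m : ℝ} (hp : 2 ≤ p) (hR : 0 < R) (hm : 1 ≤ m) (B : Set (EE n))
    {f w : EE n → ℝ} (hf : Measurable f) (hw : Measurable w) :
    ∫⁻ x in B, ENNReal.ofReal (|f x| * |w x|) ≤
      ENNReal.ofReal (m * R ^ (s * (p / (p - 1)))) *
        (∫⁻ x in B, ENNReal.ofReal (|f x| ^ (p / (p - 1)))) +
      ENNReal.ofReal m⁻¹ * ∫⁻ x in B, ENNReal.ofReal (R ^ (-(s * p)) * |w x| ^ p) := by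
  have hm0 : 0 < m := by linarith
  rw [← lintegral_const_mul _ (by fun_prop), ← lintegral_const_mul _ (by fun_prop),
    ← lintegral_add_left (by fun_prop)]
  refine lintegral_mono fun x => ?_
  simp only
  rw [← ENNReal.ofReal_mul (by positivity), ← ENNReal.ofReal_mul (by positivity),
    ← ENNReal.ofReal_add (by positivity) (by positivity)]
  apply ENNReal.ofReal_le_ofReal
  have := young_fw (s := s) hp hR hm (f x) (w x)
  linarith

lemma gag_mono {n : ℕ} {s p : ℝ} {B K : Set (EE n)} (hBK : B ⊆ K) (u : EE n → ℝ) :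
    gagliardoE n s p B u ≤ gagliardoE n s p K u := by
  unfold gagliardoE
  refine (lintegral_mono_set hBK).trans (lintegral_mono fun x => lintegral_mono_set hBK)

lemma gag_sub {n : ℕ} {s p : ℝ} (hp : 2 ≤ p) {B : Set (EE n)} (hB : MeasurableSet B)
    {u v : EE n → ℝ} (hu : Measurable u) (hv : Measurable v)
    (hug : gagliardoE n s p B u < ⊤) (hvg : gagliardoE n s p B v < ⊤) :
    gagliardoE n s p B (fun x => u x - v x) < ⊤ := by
  have hw : Measurable (fun x => u x - v x) := hu.sub hv
  have h : gagliardoE n s p B (fun x => u x - v x) ≤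
      ENNReal.ofReal (2 ^ p) * (gagliardoE n s p B u + gagliardoE n s p B v) := by
    rw [gag_eq n s p hB hw, gag_eq n s p hB hu, gag_eq n s p hB hv,
      ← lintegral_add_left (by fun_prop), ← lintegral_const_mul _ (by fun_prop)]
    refine lintegral_mono fun z => ?_
    simp only
    rw [← ENNReal.ofReal_add (by positivity) (by positivity), ← ENNReal.ofReal_mul (by positivity)]
    apply ENNReal.ofReal_le_ofReal
    have := abs_sub_rpow_le2 (by linarith : 0 ≤ p) (u z.1 - u z.2) (v z.1 - v z.2)
    have e : u z.1 - u z.2 - (v z.1 - v z.2) = (u z.1 - v z.1) - (u z.2 - v z.2) := by ring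
    rwa [e] at this
  exact h.trans_lt (ENNReal.mul_lt_top ENNReal.ofReal_lt_top (ENNReal.add_lt_top.mpr ⟨hug, hvg⟩))

lemma lp_sub {n : ℕ} {p : ℝ} (hp : 2 ≤ p) {B : Set (EE n)}
    {u v : EE n → ℝ} (hu : Measurable u) (hv : Measurable v)
    (hug : ∫⁻ x in B, ENNReal.ofReal (|u x| ^ p) < ⊤)
    (hvg : ∫⁻ x in B, ENNReal.ofReal (|v x| ^ p) < ⊤) :
    ∫⁻ x in B, ENNReal.ofReal (|u x - v x| ^ p) < ⊤ := by
  have h : ∫⁻ x in B, ENNReal.ofReal (|u x - v x| ^ p) ≤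
      ENNReal.ofReal (2 ^ p) * ((∫⁻ x in B, ENNReal.ofReal (|u x| ^ p)) +
        ∫⁻ x in B, ENNReal.ofReal (|v x| ^ p)) := by
    rw [← lintegral_add_left (by fun_prop), ← lintegral_const_mul _ (by fun_prop)]
    refine lintegral_mono fun z => ?_
    simp only
    rw [← ENNReal.ofReal_add (by positivity) (by positivity), ← ENNReal.ofReal_mul (by positivity)]
    exact ENNReal.ofReal_le_ofReal (abs_sub_rpow_le2 (by linarith : 0 ≤ p) (u z) (v z))
  exact h.trans_lt (ENNReal.mul_lt_top ENNReal.ofReal_lt_top (ENNReal.add_lt_top.mpr ⟨hug, hvg⟩))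

theorem comparison_fractional_seminorm_superquadratic (n : ℕ) (p s : ℝ) (hp : 2 ≤ p)
    (hs₁ : 0 < s) (hs₂ : s < 1) :
    ∃ c : ℝ, 0 < c ∧
      ∀ (Ω : Set (EuclideanSpace ℝ (Fin n))) (f u v : EuclideanSpace ℝ (Fin n) → ℝ)
        (x₀ : EuclideanSpace ℝ (Fin n)) (R : ℝ),
        IsOpen Ω → Bornology.IsBounded Ω →
        MemLploc n (p / (p - 1)) Ω f →
        0 < R → closedBall x₀ (2 * R) ⊆ Ω →
        IsLocalWeakSolution n p s Ω f u →
        IsLocalWeakSolution n p s (ball x₀ R) (fun _ => 0) v →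
        (∫⁻ x in ball x₀ R, ENNReal.ofReal (|v x| ^ p)) < ⊤ →
        gagliardoE n s p (ball x₀ R) v < ⊤ →
        (∀ᵐ x, x ∉ ball x₀ R → v x = u x) →
        gagliardoE n s p Set.univ (fun x => u x - v x) ≤
          ENNReal.ofReal (c * R ^ (s * (p / (p - 1)))) *
            ∫⁻ x in ball x₀ R, ENNReal.ofReal (|f x| ^ (p / (p - 1))) := by
  have hp0 : p ≠ 0 := by linarith
  have hsp : 0 < s * p := mul_pos hs₁ (by linarith)
  have hsp' : s * p < p := by nlinarith
  by_cases hn : n = 0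
  · subst hn
    refine ⟨1, one_pos, ?_⟩
    intro Ω f u v x₀ R _ _ _ _ _ _ _ _ _ _
    have : gagliardoE 0 s p Set.univ (fun x => u x - v x) = 0 := by
      unfold gagliardoE
      have e : ∀ x y : EuclideanSpace ℝ (Fin 0), x = y := fun x y => Subsingleton.elim x y
      have e2 : ∀ x y : EuclideanSpace ℝ (Fin 0), ENNReal.ofReal
          (|(u x - v x) - (u y - v y)| ^ p / dist x y ^ (((0 : ℕ) : ℝ) + s * p)) = 0 := by
        intro x y
        rw [e x y, sub_self, abs_zero, Real.zero_rpow hp0, zero_div, ENNReal.ofReal_zero]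
      simp only [e2, lintegral_zero]
    rw [this]
    exact zero_le
  obtain ⟨C, hC0, hC⟩ := kernel_upper (n := n) hn hsp hsp'
  obtain ⟨c, hc0, hc⟩ := kernel_lower (n := n) (p := p) hn hsp
  have hk := c0_pos p
  set m : ℝ := 1 + 2 / (c0 p * c) with hmdef
  have hm1 : 1 ≤ m := by
    have : 0 ≤ 2 / (c0 p * c) := by positivity
    linarith
  have hm0 : 0 < m := by linarith
  have hab : 2 * (m⁻¹ * c⁻¹) ≤ c0 p := by
    have h1 : 2 ≤ m * (c0 p * c) := by
      rw [hmdef, add_mul, div_mul_cancel₀ _ (by positivity)]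
      have : 0 < c0 p * c := by positivity
      linarith
    have : 2 * (m⁻¹ * c⁻¹) = 2 / (m * c) := by field_simp
    rw [this, div_le_iff₀ (by positivity)]
    linarith
  refine ⟨2 / c0 p * m, by positivity, ?_⟩
  intro Ω f u v x₀ R _ _ hf hR hΩ2 hu hv hvp hvg hvu
  have hΩ : closedBall x₀ R ⊆ Ω := (closedBall_subset_closedBall (by linarith)).trans hΩ2
  have hBK : ball x₀ R ⊆ closedBall x₀ R := ball_subset_closedBall
  have hKc : IsCompact (closedBall x₀ R) := isCompact_closedBall x₀ R
  have hum := hu.1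
  have hvm := hv.1
  have hw : Measurable (fun x => u x - v x) := hum.sub hvm
  obtain ⟨hup, hug⟩ := hu.2.1 _ hΩ hKc
  have hup' := (lintegral_mono_set hBK).trans_lt hup
  have hug' := (gag_mono hBK u).trans_lt hug
  have hfp := (lintegral_mono_set hBK).trans_lt (hf.2 _ hΩ hKc)
  have hwp := lp_sub hp hum hvm hup' hvp
  have hwg := gag_sub hp measurableSet_ball hum hvm hug' hvg
  have hae : ∀ᵐ x, x ∉ ball x₀ R → u x - v x = 0 := by
    filter_upwards [hvu] with x hx hxB
    rw [hx hxB, sub_self]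
  have hfw := fw_bound (s := s) hp hR hm1 (ball x₀ R) hf.1 hw
  have hF : (∫⁻ x in ball x₀ R, ENNReal.ofReal (|f x| * |u x - v x|)) < ⊤ := by
    refine hfw.trans_lt (ENNReal.add_lt_top.mpr ⟨ENNReal.mul_lt_top ENNReal.ofReal_lt_top hfp,
      ENNReal.mul_lt_top ENNReal.ofReal_lt_top ?_⟩)
    have e : ∀ x, ENNReal.ofReal (R ^ (-(s * p)) * |u x - v x| ^ p) =
        ENNReal.ofReal (R ^ (-(s * p))) * ENNReal.ofReal (|u x - v x| ^ p) :=
      fun x => ENNReal.ofReal_mul (by positivity)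
    simp only [e]
    rw [lintegral_const_mul _ (by fun_prop)]
    exact ENNReal.mul_lt_top ENNReal.ofReal_lt_top hwp
  have hmain := step2 hp hsp hsp' hC0 hC hc0 hR (fun x hx => hc x₀ x R hx) hΩ hu hv hug' hvg hwp
    hwg hae hF
  have hlow := lp_lower hp hsp hc0 x₀ (fun x hx => hc x₀ x R hx) hw hae
  have hG : gagliardoE n s p Set.univ (fun x => u x - v x) < ⊤ := by
    by_contra h
    rw [not_lt, top_le_iff] at h
    rw [h, ENNReal.mul_top (by simpa using hk)] at hmain
    exact absurd hF (not_lt.mpr hmain)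
  have hfin := absorb hG hk (by positivity : 0 ≤ m⁻¹ * c⁻¹) hab
    (A := ENNReal.ofReal (m * R ^ (s * (p / (p - 1)))) *
        (∫⁻ x in ball x₀ R, ENNReal.ofReal (|f x| ^ (p / (p - 1))))) (by
      refine hmain.trans (hfw.trans ?_)
      rw [ENNReal.ofReal_mul (by positivity : 0 ≤ m⁻¹), mul_assoc]
      gcongr)
  refine hfin.trans (le_of_eq ?_)
  rw [← mul_assoc, ← ENNReal.ofReal_mul (by positivity), mul_assoc]
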